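/- arXiv:2101.06226 — 2 statements merged into one kernel-verified Lean document; each statement's English description precedes it below -/
import Mathlib

section
/- Let q be a prime power with q ≥ 4 and let H be a finite almost simple group whose socle S is isomorphic to PSL_2(q), with H ≠ S. Then for every subgroup K of H with H = KS there exists a pp-element x ∈ S such that H = ⟨K, x⟩ (that is, t(H) = 1). -/
open scoped Pointwise MatrixGroups

/-- An element of a group is a `pp`-element if its order is a prime power. -/
def IsPPElement {G : Type*} [Group G] (g : G) : Prop := IsPrimePow (orderOf g)

section
/-- A group acting on a set like a group of Moebius transformations on a projective line, such that
every element has a fixed point. -/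
structure MobAct (E L Ω : Type*) [Field E] [Group L] [MulAction L Ω] : Prop where
  chart : ∀ ω : Ω, ∃ e : Ω ≃ Option E, e ω = none ∧ ∀ g : L, g • ω = ω →
    ∃ (a : Eˣ) (b : E), ∀ z : E, e (g • e.symm (some z)) = some (a * z + b)
  fix : ∀ g : L, ∃ ω : Ω, g • ω = ω

theorem MobAct.subgroup {E S Ω : Type*} [Field E] [Group S] [MulAction S Ω]
    (h : MobAct E S Ω) (L : Subgroup S) : MobAct E L Ω where
  chart := fun ω => by
    obtain ⟨e, he, h1⟩ := h.chart ω
    exact ⟨e, he, fun g hg => h1 g hg⟩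
  fix := fun g => h.fix g

theorem MobAct.local {E L Ω : Type*} [Field E] [Finite E] (p : ℕ) [Fact p.Prime] [CharP E p]
    [Group L] [Finite L] [MulAction L Ω]
    [FaithfulSMul L Ω] (h : MobAct E L Ω) (ω : Ω) :
    ∃ χ : MulAction.stabilizer L ω →* Eˣ,
      (∀ g, χ g = 1 → g ^ p = 1) ∧
      (∀ g, g ≠ 1 → χ g = 1 → ∀ η : Ω, (g : L) • η = η → η = ω) ∧
      (∀ g, χ g ≠ 1 → ∃ ω' : Ω, ω' ≠ ω ∧ ∀ η : Ω, (g : L) • η = η ↔ η = ω ∨ η = ω') ∧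
      (Nat.card χ.range ∣ Nat.card χ.ker - 1) := by
  classical
  obtain ⟨e, he, h1⟩ := h.chart ω
  have h2 : ∀ g : MulAction.stabilizer L ω, ∃ (a : Eˣ) (b : E), ∀ z : E,
      e (g • e.symm (some z)) = some (a * z + b) := fun g => h1 g g.2
  choose a b hab using h2
  have hact : ∀ g z, (g : MulAction.stabilizer L ω) • e.symm (some z)
      = e.symm (some (a g * z + b g)) := by
    intro g z
    rw [← hab g z, Equiv.symm_apply_apply]
  have hmul : ∀ g g' z, (a (g * g') : E) * z + b (g * g') = a g * (a g' * z + b g') + b g := by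
    intro g g' z
    have := hact (g * g') z
    rw [mul_smul, hact g' z, hact g] at this
    have := e.symm.injective this
    simpa using this.symm
  have hb : ∀ g g', b (g * g') = a g * b g' + b g := by
    intro g g'
    simpa using hmul g g' 0
  have ha : ∀ g g', a (g * g') = a g * a g' := by
    intro g g'
    have h3 := hmul g g' 1
    rw [hb] at h3
    ext
    push_cast
    linear_combination h3
  have ha1 : a 1 = 1 := by
    have := ha 1 1
    simpa using this
  have hω : ∀ η : Ω, η ≠ ω → ∃ z, η = e.symm (some z) := by
    intro η hη
    cases hz : e η with
    | none => exact absurd (e.injective (hz.trans he.symm)) hη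
    | some z => exact ⟨z, by rw [← hz, Equiv.symm_apply_apply]⟩
  have hω' : ∀ z, e.symm (some z) ≠ ω := by
    intro z hz
    have := congrArg e hz
    rw [he] at this
    simp at this
  have hinj : ∀ g, a g = 1 → b g = 0 → g = 1 := by
    intro g hg hg'
    have : (g : L) = 1 := by
      apply FaithfulSMul.eq_of_smul_eq_smul (α := Ω)
      intro η
      rw [one_smul]
      by_cases hη : η = ω
      · rw [hη]; exact g.2
      · obtain ⟨z, rfl⟩ := hω η hη
        have := hact g z
        rw [hg, hg'] at this
        simp only [Units.val_one, one_mul, add_zero] at this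
        exact this
    exact Subtype.ext this
  let χ : MulAction.stabilizer L ω →* Eˣ :=
    { toFun := a, map_one' := ha1, map_mul' := ha }
  have hχ : ∀ g, χ g = a g := fun _ => rfl
  have hpow : ∀ g, a g = 1 → ∀ n : ℕ, a (g ^ n) = 1 ∧ b (g ^ n) = n * b g := by
    intro g hg n
    induction n with
    | zero =>
      refine ⟨by simpa using ha1, ?_⟩
      have := hb 1 1
      rw [ha1] at this
      simp at this
      simpa using this
    | succ n ih =>
      rw [pow_succ, ha, hb, ih.1, ih.2, hg]
      refine ⟨by simp, ?_⟩
      push_cast; ring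
  refine ⟨χ, ?_, ?_, ?_, ?_⟩
  · intro g hg
    have := hpow g hg p
    apply hinj _ this.1
    rw [this.2]; simp
  · intro g hg1 hg η hη
    by_contra hne
    obtain ⟨z, rfl⟩ := hω η hne
    have h3 := hact g z
    rw [hχ] at hg
    have h4 : g • e.symm (some z) = e.symm (some z) := hη
    rw [h4, hg] at h3
    have h5 := e.symm.injective h3
    simp at h5
    exact hg1 (hinj g hg h5)
  · intro g hg
    rw [hχ] at hg
    have hg' : (1 - (a g : E)) ≠ 0 := by
      intro h0
      apply hg
      have h00 : (a g : E) = 1 := by linear_combination -h0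
      exact Units.ext h00
    refine ⟨e.symm (some (b g / (1 - a g))), hω' _, ?_⟩
    intro η
    constructor
    · intro hη
      by_cases hne : η = ω
      · exact Or.inl hne
      · right
        obtain ⟨z, rfl⟩ := hω η hne
        have h3 := hact g z
        have h4 : g • e.symm (some z) = e.symm (some z) := hη
        rw [h4] at h3
        have h5 := e.symm.injective h3
        simp only [Option.some.injEq] at h5
        congr 2
        rw [eq_div_iff hg']
        linear_combination h5
    · rintro (rfl | rfl)
      · exact g.2
      · refine (hact g _).trans ?_
        congr 2
        field_simp
        ring
  · let X : SubMulAction χ.range E :=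
      { carrier := {v | v ≠ 0 ∧ ∃ u, χ u = 1 ∧ b u = v}
        smul_mem' := by
          rintro ⟨r, g, rfl⟩ v ⟨hv, u, hu, rfl⟩
          refine ⟨?_, g * u * g⁻¹, ?_, ?_⟩
          · change (((χ g : Eˣ) : E) * b u) ≠ 0
            exact mul_ne_zero (Units.ne_zero _) hv
          · simp [hu]
          · change _ = (((χ g : Eˣ) : E) * b u)
            have h4 := hb g g⁻¹
            rw [hb (g * u) g⁻¹, ha, hb g u, hχ]
            rw [hχ] at hu
            rw [hu]
            have h5 := hpow 1 ha1 0
            simp at h5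
            rw [mul_inv_cancel, h5.2] at h4
            push_cast
            linear_combination -h4 }
    have hfree : ∀ v : X, MulAction.stabilizer χ.range v = ⊥ := by
      rintro ⟨v, hv0, hv⟩
      rw [eq_bot_iff]
      rintro r hr
      rw [MulAction.mem_stabilizer_iff] at hr
      have h3 : ((r : Eˣ) : E) * v = v := congrArg Subtype.val hr
      rw [Subgroup.mem_bot]
      ext
      have : ((r : Eˣ) : E) = 1 := mul_right_cancel₀ hv0 (by rw [h3, one_mul])
      simpa using this
    have hcard := Nat.card_congr (MulAction.selfEquivOrbitsQuotientProd hfree)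
    rw [Nat.card_prod] at hcard
    have hX : Nat.card X = Nat.card χ.ker - 1 := by
      have e1 : {u : χ.ker // u ≠ 1} ≃ X := by
        refine Equiv.ofBijective (fun u => ⟨b u.1.1, ?_, u.1.1, u.1.2, rfl⟩) ⟨?_, ?_⟩
        · intro h0
          exact u.2 (Subtype.ext (hinj _ u.1.2 h0))
        · rintro ⟨⟨u, hu⟩, hu1⟩ ⟨⟨v, hv⟩, hv1⟩ huv
          have huv' : b u = b v := congrArg Subtype.val huv
          rw [MonoidHom.mem_ker, hχ] at hu hv
          have h6 : u * v⁻¹ = 1 := by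
            have hv' : a v⁻¹ = 1 := by
              have := map_inv χ v
              rw [hχ, hχ, hv] at this
              simpa using this
            apply hinj
            · rw [ha, hu, hv', one_mul]
            · have h7 := hb v v⁻¹
              have h5 := hpow 1 ha1 0
              simp at h5
              rw [mul_inv_cancel, h5.2, hv] at h7
              rw [hb, hu, huv']
              push_cast at h7 ⊢
              linear_combination -h7
          have h8 : u = v := by simpa using mul_inv_eq_one.mp h6
          subst h8
          rfl
        · rintro ⟨v, hv0, u, hu, rfl⟩
          refine ⟨⟨⟨u, hu⟩, ?_⟩, rfl⟩
          intro hu1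
          apply hv0
          have : u = 1 := congrArg Subtype.val hu1
          have h5 := hpow 1 ha1 0
          simp at h5
          rw [this, h5.2]
      rw [← Nat.card_congr e1]
      have : Fintype χ.ker := Fintype.ofFinite _
      rw [Nat.card_eq_fintype_card, Nat.card_eq_fintype_card, Fintype.card_subtype_compl]
      simp
    rw [← hX, hcard]
    exact Dvd.intro_left _ rfl

end

section
open Classical in
/-- The contribution of a pair (element, point) to the Klein counting formula. -/
noncomputable def kw {L Ω : Type*} [Group L] [MulAction L Ω] (g : L) (ω : Ω) : ℕ :=
  if g ≠ 1 ∧ g • ω = ω then (if ∀ η : Ω, g • η = η → η = ω then 2 else 1) else 0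

/-- The weight of a point. -/
noncomputable def kW (L : Type*) {Ω : Type*} [Group L] [Fintype L] [MulAction L Ω] (ω : Ω) : ℕ :=
  ∑ g : L, kw g ω

/-- The parabolic elements at a point. -/
def parSet (L : Type*) {Ω : Type*} [Group L] [MulAction L Ω] (ω : Ω) : Set L :=
  {g | g ≠ 1 ∧ g • ω = ω ∧ ∀ η : Ω, g • η = η → η = ω}

/-- One more than the number of parabolic elements at a point. -/
noncomputable def parQ (L : Type*) {Ω : Type*} [Group L] [MulAction L Ω] (ω : Ω) : ℕ :=
  (parSet L ω).ncard + 1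

theorem kW_smul {L Ω : Type*} [Group L] [Fintype L] [MulAction L Ω] (k : L) (ω : Ω) :
    kW L (k • ω) = kW L ω := by
  classical
  unfold kW
  refine (Fintype.sum_equiv (MulAut.conj k).toEquiv _ _ ?_).symm
  intro g
  have h1 : ∀ η : Ω, (k * g * k⁻¹) • k • η = k • η ↔ g • η = η := by
    intro η
    rw [smul_smul, inv_mul_cancel_right, mul_smul]
    exact smul_left_cancel_iff k
  have h2 : (∀ η : Ω, (k * g * k⁻¹) • η = η → η = k • ω) ↔ (∀ η : Ω, g • η = η → η = ω) := by
    constructor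
    · intro h η hη
      have := h (k • η) ((h1 η).2 hη)
      exact (smul_left_cancel_iff k).1 this
    · intro h η hη
      have h3 := h1 (k⁻¹ • η)
      rw [smul_inv_smul] at h3
      rw [← h _ (h3.1 hη), smul_inv_smul]
  have h4 : k * g * k⁻¹ ≠ 1 ↔ g ≠ 1 := by
    rw [Ne, Ne, mul_inv_eq_one, mul_eq_left]
  simp only [kw, MulEquiv.toEquiv_eq_coe, EquivLike.coe_coe, MulAut.conj_apply, h1, h2, h4]

theorem MobAct.local2 {E L Ω : Type*} [Field E] [Finite E] (p : ℕ) [Fact p.Prime] [CharP E p]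
    [Group L] [Fintype L] [MulAction L Ω]
    [FaithfulSMul L Ω] (h : MobAct E L Ω) (ω : Ω) :
    ∃ χ : MulAction.stabilizer L ω →* Eˣ,
      (∀ g, χ g = 1 → g ^ p = 1) ∧
      (∀ g, χ g = 1 ↔ g = 1 ∨ (g : L) ∈ parSet L ω) ∧
      Nat.card χ.ker = parQ L ω ∧
      (Nat.card χ.range ∣ parQ L ω - 1) ∧
      (∃ a, parQ L ω = p ^ a) ∧
      Nat.card (MulAction.stabilizer L ω) = parQ L ω * Nat.card χ.range ∧
      Nat.Coprime (Nat.card χ.range) p ∧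
      kW L ω + 2 = Nat.card (MulAction.stabilizer L ω) + parQ L ω := by
  classical
  obtain ⟨χ, h1, h2, h3, h4⟩ := h.local p ω
  have h5 : ∀ g, χ g = 1 ↔ g = 1 ∨ (g : L) ∈ parSet L ω := by
    intro g
    constructor
    · intro hg
      by_cases hg1 : g = 1
      · exact Or.inl hg1
      · right
        exact ⟨fun hh => hg1 (Subtype.ext hh), g.2, h2 g hg1 hg⟩
    · rintro (rfl | hg)
      · exact map_one _
      · by_contra hne
        obtain ⟨ω', hω', h6⟩ := h3 g hne
        exact hω' (hg.2.2 _ ((h6 ω').2 (Or.inr rfl)))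
  have h6 : Nat.card χ.ker = parQ L ω := by
    have e1 : {u : χ.ker // u ≠ 1} ≃ parSet L ω := by
      refine Equiv.ofBijective (fun u => ⟨u.1.1.1, ?_⟩) ⟨?_, ?_⟩
      · rcases (h5 u.1.1).1 u.1.2 with h7 | h7
        · exact absurd (Subtype.ext h7) u.2
        · exact h7
      · rintro ⟨⟨⟨u, _⟩, hu⟩, hu1⟩ ⟨⟨⟨v, _⟩, hv⟩, hv1⟩ huv
        have huv' : u = v := congrArg Subtype.val huv
        subst huv'
        rfl
      · rintro ⟨v, hv⟩
        refine ⟨⟨⟨⟨v, hv.2.1⟩, (h5 _).2 (Or.inr hv)⟩, ?_⟩, rfl⟩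
        intro hh
        exact hv.1 (congrArg (fun z => z.1.1) hh)
    have h8 := Nat.card_congr e1
    have : Fintype χ.ker := Fintype.ofFinite _
    rw [Nat.card_eq_fintype_card, Fintype.card_subtype_compl] at h8
    rw [Nat.card_coe_set_eq] at h8
    simp only [Fintype.card_unique] at h8
    have : 0 < Fintype.card χ.ker := Fintype.card_pos
    rw [parQ, ← h8, Nat.card_eq_fintype_card]
    omega
  have hs : Nat.card (MulAction.stabilizer L ω) = parQ L ω * Nat.card χ.range := by
    rw [← h6, mul_comm, ← Subgroup.index_ker χ, Subgroup.index_mul_card]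
  rw [h6] at h4
  refine ⟨χ, h1, h5, h6, h4, ?_, hs, ?_, ?_⟩
  · rw [← h6]
    apply IsPGroup.iff_card.1
    intro g
    refine ⟨1, ?_⟩
    rw [pow_one]
    apply Subtype.ext
    exact h1 g.1 g.2
  · have h7 : Nat.card χ.range ∣ Nat.card Eˣ := Subgroup.card_subgroup_dvd_card _
    apply Nat.Coprime.coprime_dvd_left h7
    have : Fintype E := Fintype.ofFinite _
    rw [Nat.card_eq_fintype_card, Fintype.card_units]
    obtain ⟨n, hp, hn⟩ := FiniteField.card E p
    rw [hn]
    have hp1 : 1 < p := hp.one_lt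
    have h8 : 0 < p ^ (n : ℕ) := by positivity
    have h9 : p ∣ p ^ (n : ℕ) := dvd_pow_self _ n.2.ne'
    rw [Nat.coprime_comm, Nat.Prime.coprime_iff_not_dvd hp]
    intro h10
    have : p ∣ 1 := by
      have := Nat.dvd_sub h9 h10
      rwa [Nat.sub_sub_self h8] at this
    exact hp.one_lt.ne' (Nat.dvd_one.1 this)
  · have h7 : ∀ g : L, kw g ω = (if g • ω = ω ∧ g ≠ 1 then 1 else 0) +
        (if g ∈ parSet L ω then 1 else 0) := by
      intro g
      by_cases hg1 : g = 1
      · subst hg1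
        simp [kw, parSet]
      by_cases hg2 : g • ω = ω
      · by_cases hg3 : ∀ η : Ω, g • η = η → η = ω
        · have : g ∈ parSet L ω := ⟨hg1, hg2, hg3⟩
          simp [kw, hg1, hg2, this]
          exact hg3
        · have : g ∉ parSet L ω := fun hh => hg3 hh.2.2
          simp only [kw, hg1, hg2, this, hg3]
          simp
      · have : g ∉ parSet L ω := fun hh => hg2 hh.2.1
        simp [kw, hg2, this]
    have h8 : kW L ω = (Finset.univ.filter (fun g : L => g • ω = ω ∧ g ≠ 1)).card +
        (Finset.univ.filter (fun g : L => g ∈ parSet L ω)).card := by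
      unfold kW
      rw [Finset.sum_congr rfl (fun g _ => h7 g), Finset.sum_add_distrib,
        Finset.card_filter, Finset.card_filter]
    have h9 : (Finset.univ.filter (fun g : L => g ∈ parSet L ω)).card + 1 = parQ L ω := by
      rw [parQ, Set.ncard_eq_toFinset_card', Set.toFinset_card, Fintype.card_subtype]
    have h10 : (Finset.univ.filter (fun g : L => g • ω = ω ∧ g ≠ 1)).card + 1 =
        Nat.card (MulAction.stabilizer L ω) := by
      have : Finset.univ.filter (fun g : L => g • ω = ω ∧ g ≠ 1) =
        (Finset.univ.filter (fun g : L => g • ω = ω)).erase 1 := by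
        ext g; simp [and_comm]
      rw [this, Finset.card_erase_add_one (by simp)]
      rw [Nat.card_eq_fintype_card, ← Fintype.card_subtype]
      exact Fintype.card_congr (Equiv.refl _)
    omega

theorem MobAct.sum_kw {E L Ω : Type*} [Field E] [Finite E] (p : ℕ) [Fact p.Prime] [CharP E p]
    [Group L] [Fintype L] [MulAction L Ω] [Fintype Ω]
    [FaithfulSMul L Ω] (h : MobAct E L Ω) (g : L) (hg : g ≠ 1) :
    ∑ ω : Ω, kw g ω = 2 := by
  classical
  obtain ⟨ω, hω⟩ := h.fix g
  obtain ⟨χ, h1, h2, h3, h4⟩ := h.local p ω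
  have hg1 : (⟨g, hω⟩ : MulAction.stabilizer L ω) ≠ 1 := fun hh => hg (congrArg Subtype.val hh)
  by_cases hc : χ ⟨g, hω⟩ = 1
  · have h5 := h2 _ hg1 hc
    rw [Finset.sum_eq_single ω]
    · have : ∀ η : Ω, g • η = η → η = ω := h5
      rw [kw, if_pos ⟨hg, hω⟩, if_pos this]
    · intro η _ hη
      have : g • η ≠ η := fun hh => hη (h5 η hh)
      simp [kw, this]
    · simp
  · obtain ⟨ω', hω', h6⟩ := h3 _ hc
    have h6' : ∀ η : Ω, g • η = η ↔ η = ω ∨ η = ω' := h6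
    have h7 : ∀ η, kw g η = (if η = ω then 1 else 0) + (if η = ω' then 1 else 0) := by
      intro η
      have h8 : ¬ ∀ ξ : Ω, ξ = ω ∨ ξ = ω' → ξ = η := by
        intro h9
        exact hω' ((h9 ω' (Or.inr rfl)).trans (h9 ω (Or.inl rfl)).symm)
      simp only [kw, h6', h8]
      by_cases ha : η = ω
      · subst ha
        simp [hg, hω'.symm]
      · by_cases hb : η = ω'
        · subst hb
          simp [hg, ha]
        · simp [ha, hb]
    rw [Finset.sum_congr rfl (fun η _ => h7 η), Finset.sum_add_distrib]
    simp

open Classical in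
/-- The weight of an orbit. -/
noncomputable def kO (L : Type*) {Ω : Type*} [Group L] [Fintype L] [MulAction L Ω] [Fintype Ω]
    (o : MulAction.orbitRel.Quotient L Ω) : ℕ :=
  ∑ ω : Ω with (Quotient.mk'' ω : MulAction.orbitRel.Quotient L Ω) = o, kW L ω

theorem MobAct.sum_kO {E L Ω : Type*} [Field E] [Finite E] (p : ℕ) [Fact p.Prime] [CharP E p]
    [Group L] [Fintype L] [MulAction L Ω] [Fintype Ω]
    [Fintype (MulAction.orbitRel.Quotient L Ω)]
    [FaithfulSMul L Ω] (h : MobAct E L Ω) :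
    ∑ o : MulAction.orbitRel.Quotient L Ω, kO L o + 2 = 2 * Nat.card L := by
  classical
  have h1 : ∑ o : MulAction.orbitRel.Quotient L Ω, kO L o = ∑ ω : Ω, kW L ω := by
    unfold kO
    exact Finset.sum_fiberwise _ _ _
  rw [h1]
  unfold kW
  rw [Finset.sum_comm]
  have h2 : ∀ g : L, ∑ ω : Ω, kw g ω = if g ≠ 1 then 2 else 0 := by
    intro g
    split_ifs with hg
    · exact h.sum_kw p g hg
    · simp only [not_not] at hg
      subst hg
      simp [kw]
  rw [Finset.sum_congr rfl (fun g _ => h2 g), ← Finset.sum_filter, Finset.sum_const, smul_eq_mul,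
    Nat.card_eq_fintype_card]
  have h3 : (Finset.univ.filter (fun g : L => g ≠ 1)).card + 1 = Fintype.card L := by
    rw [Finset.filter_ne', Finset.card_erase_add_one (Finset.mem_univ _), Finset.card_univ]
  omega

theorem kO_mk (L : Type*) {Ω : Type*} [Group L] [Fintype L] [MulAction L Ω] [Fintype Ω] (ω : Ω) :
    kO L (Quotient.mk'' ω : MulAction.orbitRel.Quotient L Ω) =
      Nat.card (MulAction.orbit L ω) * kW L ω := by
  classical
  unfold kO
  have h1 : ∀ η ∈ Finset.univ.filter (fun η : Ω =>
      (Quotient.mk'' η : MulAction.orbitRel.Quotient L Ω) = Quotient.mk'' ω),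
      kW L η = kW L ω := by
    intro η hη
    simp only [Finset.mem_filter, Finset.mem_univ, true_and] at hη
    rw [Quotient.eq''] at hη
    obtain ⟨k, hk⟩ := hη
    rw [← hk]
    exact kW_smul k ω
  rw [Finset.sum_congr rfl h1, Finset.sum_const, smul_eq_mul]
  congr 1
  rw [Nat.card_eq_fintype_card, Fintype.card_subtype]
  congr 1
  ext η
  simp only [Finset.mem_filter, Finset.mem_univ, true_and]
  rw [Quotient.eq'']
  exact Iff.rfl

end

section
theorem arith_core (Q m c N : ℕ) (hQ : 3 ≤ Q) (hm : m ∣ Q - 1) (hc : Nat.Coprime Q c) (hN : 2 ≤ N)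
    (heq : Q * m * N = c * (2 + N * (Q - 2))) :
    (N = Q + 1 ∧ ((2 * c = Q + 1 ∧ 2 * m = Q - 1) ∨ (c = Q + 1 ∧ m = Q - 1))) ∨
      (Q = 3 ∧ c = 5 ∧ m = 2 ∧ N = 10) := by
  obtain ⟨R, rfl⟩ : ∃ R, Q = R + 3 := ⟨Q - 3, by omega⟩
  obtain ⟨M, rfl⟩ : ∃ M, N = M + 2 := ⟨N - 2, by omega⟩
  have e1 : R + 3 - 2 = R + 1 := by omega
  have e2 : R + 3 - 1 = R + 2 := by omega
  rw [e1] at heq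
  rw [e2] at hm ⊢
  have h1 : R + 3 ∣ 2 + (M + 2) * (R + 1) := by
    refine hc.dvd_of_dvd_mul_left ?_
    rw [← heq, mul_assoc]
    exact dvd_mul_right _ _
  have h2 : R + 3 ∣ 2 * (M + 1) := by
    have h3 : (2 + (M + 2) * (R + 1)) + 2 * (M + 1) = (R + 3) * (M + 2) := by ring
    exact (Nat.dvd_add_right h1).1 (h3 ▸ dvd_mul_right _ _)
  obtain ⟨k, hk⟩ := h2
  obtain ⟨j, hj⟩ := hm
  have hkpos : 0 < k := by
    rcases Nat.eq_zero_or_pos k with rfl | h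
    · omega
    · exact h
  have hmpos : 0 < m := by
    rcases Nat.eq_zero_or_pos m with rfl | h
    · omega
    · exact h
  have hjpos : 0 < j := by
    rcases Nat.eq_zero_or_pos j with rfl | h
    · omega
    · exact h
  -- m (2 + kQ) = c (2 + k(Q-2))
  have h4 : m * (2 + k * (R + 3)) = c * (2 + k * (R + 1)) := by
    have h5 : (R + 3) * (m * (2 + k * (R + 3))) = (R + 3) * (c * (2 + k * (R + 1))) := by
      zify at *
      have hk' : (2 : ℤ) * M = (R + 3) * k - 2 := by linarith
      linear_combination 2 * heq + hk' * (c * (R+1) - (R + 3) * m : ℤ)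
    exact Nat.eq_of_mul_eq_mul_left (by omega) h5
  have hmc : m < c := by
    by_contra hlt
    push Not at hlt
    have : c * (2 + k * (R + 1)) ≤ m * (2 + k * (R + 1)) := Nat.mul_le_mul_right _ hlt
    nlinarith
  obtain ⟨d, hd⟩ : ∃ d, c = m + d := ⟨c - m, by omega⟩
  have hdpos : 0 < d := by omega
  subst hd
  have h6 : d * (2 + k * (R + 1)) = 2 * k * m := by nlinarith
  have hjle : j ≤ 2 := by
    by_contra hlt
    have : m * 3 ≤ R + 2 := by rw [hj]; exact Nat.mul_le_mul_left _ (by omega)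
    have h7 : 2 + k * (R + 1) ≤ 2 * k * m := by rw [← h6]; exact Nat.le_mul_of_pos_left _ hdpos
    have h8 : R = 0 := by
      by_contra hR
      nlinarith [Nat.pos_of_ne_zero hR, mul_le_mul_left this k]
    subst h8
    omega
  interval_cases j
  · -- m = R + 2
    have hm : m = R + 2 := by omega
    subst hm
    have hd4 : d < 4 := by
      by_contra hlt
      push Not at hlt
      have : 4 * (2 + k * (R + 1)) ≤ d * (2 + k * (R + 1)) := Nat.mul_le_mul_right _ hlt
      nlinarith
    interval_cases d
    · nlinarith
    · have hk2 : k = 2 := by nlinarith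
      subst hk2
      left; constructor
      · omega
      · right; constructor
        · omega
        · omega
    · have hR : R = 0 := by
        by_contra hR
        have : 1 ≤ R := Nat.pos_of_ne_zero hR
        nlinarith [Nat.mul_le_mul_left k this]
      subst hR
      right
      omega
  · have hd2 : d < 2 := by
      by_contra hlt
      push Not at hlt
      have : 2 * (2 + k * (R + 1)) ≤ d * (2 + k * (R + 1)) := Nat.mul_le_mul_right _ hlt
      nlinarith
    have hd1 : d = 1 := by omega
    subst hd1
    have hk2 : k = 2 := by nlinarith
    subst hk2
    left
    omega

theorem parQ_pos (L : Type*) {Ω : Type*} [Group L] [MulAction L Ω] (ω : Ω) : 0 < parQ L ω := by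
  unfold parQ; omega

theorem MobAct.numData {E L Ω : Type*} [Field E] [Finite E] (p : ℕ) [Fact p.Prime] [CharP E p]
    [Group L] [Fintype L] [MulAction L Ω] [Fintype Ω]
    [FaithfulSMul L Ω] (h : MobAct E L Ω) (ω : Ω) :
    ∃ N m : ℕ, Nat.card (MulAction.stabilizer L ω) = parQ L ω * m ∧ m ∣ parQ L ω - 1 ∧
      Nat.Coprime m p ∧ 0 < m ∧ 0 < N ∧ (∃ a, parQ L ω = p ^ a) ∧
      Nat.card L = N * (parQ L ω * m) ∧
      kO L (Quotient.mk'' ω : MulAction.orbitRel.Quotient L Ω) + 2 * N =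
        N * (parQ L ω * m + parQ L ω) ∧
      (N = 1 → MulAction.stabilizer L ω = ⊤) ∧ N = Nat.card (MulAction.orbit L ω) := by
  obtain ⟨χ, -, -, -, h1, h2, h3, h4, h5⟩ := h.local2 p ω
  refine ⟨Nat.card (MulAction.orbit L ω), Nat.card χ.range, h3, h1, h4, Nat.card_pos, ?_, h2, ?_,
    ?_, ?_, rfl⟩
  · have : Nonempty (MulAction.orbit L ω) := ⟨⟨ω, MulAction.mem_orbit_self ω⟩⟩
    exact Nat.card_pos
  · rw [← h3, Nat.card_coe_set_eq, ← MulAction.index_stabilizer, mul_comm, Subgroup.card_mul_index]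
  · rw [kO_mk, ← h3, ← h5]
    ring
  · rw [Nat.card_coe_set_eq, ← MulAction.index_stabilizer]
    intro h6
    exact Subgroup.index_eq_one.1 h6

theorem sum_extend {ι : Type*} [Fintype ι] [DecidableEq ι] (F : ι → ℕ) (A : Finset ι) :
    (∑ o, F o = ∑ o ∈ A, F o) ∨ ∃ o, o ∉ A ∧ 0 < F o ∧ ∑ o ∈ A, F o + F o ≤ ∑ o, F o := by
  by_cases hz : ∀ o, o ∉ A → F o = 0
  · left
    symm
    apply Finset.sum_subset (Finset.subset_univ _)
    intro o _ ho
    exact hz o ho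
  · right
    push Not at hz
    obtain ⟨o, ho, h1⟩ := hz
    refine ⟨o, ho, Nat.pos_of_ne_zero h1, ?_⟩
    rw [add_comm, ← Finset.sum_insert ho]
    exact Finset.sum_le_sum_of_subset (Finset.subset_univ _)

/-- Everything numeric one needs about an orbit. -/
structure OrbData (p g k Q m N : ℕ) : Prop where
  card : g = N * (Q * m)
  wt : k + 2 * N = N * (Q * m + Q)
  dvd : m ∣ Q - 1
  cop : Nat.Coprime m p
  mpos : 0 < m
  Npos : 0 < N
  ppow : ∃ a, Q = p ^ a

theorem OrbData.half {p g k Q m N : ℕ} (h : OrbData p g k Q m N) (hp : p.Prime) (hk : 0 < k) :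
    g ≤ 2 * k := by
  obtain ⟨h1, h2, h3, h4, h5, h6, a, rfl⟩ := h
  have hQ : 0 < p ^ a := pow_pos hp.pos _
  rcases Nat.lt_or_ge 1 (p ^ a) with hlt | hge
  · generalize p ^ a = Q at *
    have : N * 2 ≤ N * Q := Nat.mul_le_mul_left _ hlt
    nlinarith
  · have hQ1 : p ^ a = 1 := by omega
    rw [hQ1] at h1 h2
    have : 2 ≤ m := by
      by_contra hm
      have : m = 1 := by omega
      subst this
      rw [one_mul] at h2
      omega
    have : N * 2 ≤ N * m := Nat.mul_le_mul_left _ this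
    nlinarith

theorem OrbData.full {p g k Q m N : ℕ} (h : OrbData p g k Q m N) (hQ : 1 < Q) :
    k + 2 * N = g + N * Q := by
  rw [h.wt, h.card]; ring

theorem OrbData.one {p g k m N : ℕ} (h : OrbData p g k 1 m N) :
    k + N = g ∧ g = N * m := by
  have := h.wt
  have := h.card
  constructor <;> nlinarith

theorem MobAct.orbData {E L Ω : Type*} [Field E] [Finite E] (p : ℕ) [Fact p.Prime] [CharP E p]
    [Group L] [Fintype L] [MulAction L Ω] [Fintype Ω]
    [FaithfulSMul L Ω] (h : MobAct E L Ω) (ω : Ω) :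
    ∃ m, OrbData p (Nat.card L) (kO L (Quotient.mk'' ω : MulAction.orbitRel.Quotient L Ω))
      (parQ L ω) m (Nat.card (MulAction.orbit L ω)) ∧
      Nat.card (MulAction.stabilizer L ω) = parQ L ω * m := by
  obtain ⟨N, m, h1, h2, h3, h4, h5, h6, h7, h8, -, rfl⟩ := h.numData p ω
  exact ⟨m, ⟨h7, h8, h2, h3, h4, h5, h6⟩, h1⟩

/-- The structure of a group with a parabolic orbit. -/
def ParCase (L : Type*) {Ω : Type*} [Group L] [MulAction L Ω] (ω : Ω) (c : ℕ) : Prop :=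
  ∃ m, 3 ≤ parQ L ω ∧ Nat.card L = Nat.card (MulAction.orbit L ω) * (parQ L ω * m) ∧
   ((Nat.card (MulAction.orbit L ω) = parQ L ω + 1 ∧
      ((2 * c = parQ L ω + 1 ∧ 2 * m = parQ L ω - 1) ∨ (c = parQ L ω + 1 ∧ m = parQ L ω - 1))) ∨
      (parQ L ω = 3 ∧ c = 5 ∧ m = 2 ∧ Nat.card (MulAction.orbit L ω) = 10))

theorem ell_arith (p g k1 k2 c s1 s2 N0 N1 N2 : ℕ) (hp : p.Prime) (hc : 7 ≤ c ∨ (5 ≤ c ∧ p ≤ 3))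
    (hN0 : g = N0 * c) (d1 : OrbData p g k1 1 s1 N1) (d2 : OrbData p g k2 1 s2 N2)
    (h1 : 0 < k1) (h2 : 0 < k2) (h3 : N0 + N1 + N2 = g + 2) : g = 2 * c := by
  have hc5 : 5 ≤ c := by omega
  obtain ⟨e1, f1⟩ := d1.one
  obtain ⟨e2, f2⟩ := d2.one
  have hs1 : 2 ≤ s1 := by
    by_contra hh
    have : s1 ≤ 1 := by omega
    have := Nat.mul_le_mul_left N1 this
    omega
  have hs2 : 2 ≤ s2 := by
    by_contra hh
    have : s2 ≤ 1 := by omega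
    have := Nat.mul_le_mul_left N2 this
    omega
  have g0 : N0 * 5 ≤ g := by rw [hN0]; exact Nat.mul_le_mul_left _ hc5
  have g1 : N1 * 2 ≤ g := by rw [f1]; exact Nat.mul_le_mul_left _ hs1
  have g2 : N2 * 2 ≤ g := by rw [f2]; exact Nat.mul_le_mul_left _ hs2
  have key : ∀ a b A B : ℕ, OrbData p g a 1 A B → g = B * A → 2 ≤ A → B * 2 ≤ g → 3 ≤ A →
      ∀ b' B' A' : ℕ, OrbData p g b' 1 A' B' → g = B' * A' → 2 ≤ A' → N0 + B + B' = g + 2 → False := by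
    intro a b A B dA hA _ _ hA3 b' B' A' dB hB hA' hsum
    have t1 : B * 3 ≤ g := by rw [hA]; exact Nat.mul_le_mul_left _ hA3
    have t2 : B' * 2 ≤ g := by rw [hB]; exact Nat.mul_le_mul_left _ hA'
    rcases hc with hc7 | ⟨_, hp3⟩
    · have : N0 * 7 ≤ g := by rw [hN0]; exact Nat.mul_le_mul_left _ hc7
      omega
    · have hp2 := hp.two_le
      have hp23 : p = 2 ∨ p = 3 := by omega
      have hcA := dA.cop
      have hcB := dB.cop
      by_cases h3 : 3 ≤ A'
      · have : B' * 3 ≤ g := by rw [hB]; exact Nat.mul_le_mul_left _ h3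
        omega
      · have : A' = 2 := by omega
        subst this
        rcases hp23 with rfl | rfl
        · simp at hcB
        · have : A ≠ 3 := by
            rintro rfl
            simp at hcA
          have : B * 4 ≤ g := by rw [hA]; exact Nat.mul_le_mul_left _ (by omega)
          omega
  by_cases h3 : 3 ≤ s1
  · exact (key k1 0 s1 N1 d1 f1 hs1 g1 h3 k2 N2 s2 d2 f2 hs2 (by omega)).elim
  · by_cases h4 : 3 ≤ s2
    · exact (key k2 0 s2 N2 d2 f2 hs2 g2 h4 k1 N1 s1 d1 f1 hs1 (by omega)).elim
    · have : s1 = 2 := by omega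
      have : s2 = 2 := by omega
      subst s1 s2
      have : N0 = 2 := by omega
      rw [hN0, this]

theorem MobAct.coreA {E L Ω : Type*} [Field E] [Finite E] (p : ℕ) [Fact p.Prime] [CharP E p]
    [Group L] [Fintype L] [MulAction L Ω] [Fintype Ω]
    [FaithfulSMul L Ω] (h : MobAct E L Ω) (ω0 : Ω) (c : ℕ)
    (hc : c = Nat.card (MulAction.stabilizer L ω0)) (hQ0 : parQ L ω0 = 1)
    (hc7 : 7 ≤ c ∨ (5 ≤ c ∧ p ≤ 3)) :
    Nat.card L = c ∨ Nat.card L = 2 * c ∨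
      ∃ ω1 : Ω, 1 < parQ L ω1 ∧ (c ∣ parQ L ω1 - 1 ∨ ParCase L ω1 c) := by
  classical
  have : Fintype (MulAction.orbitRel.Quotient L Ω) := Fintype.ofFinite _
  have hp : p.Prime := Fact.out
  have hsum := h.sum_kO p
  obtain ⟨m0, d0, hm0⟩ := h.orbData p ω0
  rw [hQ0, one_mul] at hm0
  rw [hQ0] at d0
  rw [← hm0.trans rfl, ← hc] at d0
  generalize hN0 : Nat.card (MulAction.orbit L ω0) = N0 at d0
  obtain ⟨e0, f0⟩ := d0.one
  have hc5 : 5 ≤ c := by omega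
  set o0 : MulAction.orbitRel.Quotient L Ω := Quotient.mk'' ω0 with ho0
  have hgpos : 0 < Nat.card L := Nat.card_pos
  by_cases hpar : ∃ ω1 : Ω, 1 < parQ L ω1
  · right
    obtain ⟨ω1, hω1⟩ := hpar
    obtain ⟨m1, d1, hm1⟩ := h.orbData p ω1
    set o1 : MulAction.orbitRel.Quotient L Ω := Quotient.mk'' ω1 with ho1
    have hne : o1 ≠ o0 := by
      intro heq
      have e1 := d1.full hω1
      have := Nat.mul_le_mul_left (Nat.card (MulAction.orbit L ω1)) hω1
      rw [heq] at e1
      have := d0.Npos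
      omega
    have e1 := d1.full hω1
    have hcop : Nat.Coprime (parQ L ω1) c := by
      obtain ⟨a, ha⟩ := d1.ppow
      rw [ha]
      exact Nat.Coprime.pow_left _ d0.cop.symm
    have hdvd := d1.dvd
    have hcard := d1.card
    have hNpos := d1.Npos
    -- no further orbit
    have key : N0 + 2 * Nat.card (MulAction.orbit L ω1) =
        2 + Nat.card (MulAction.orbit L ω1) * parQ L ω1 := by
      rcases sum_extend (kO L (Ω := Ω)) {o0, o1} with hs | ⟨o, ho, hpos, hle⟩
      · rw [Finset.sum_pair hne.symm] at hs
        omega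
      · exfalso
        rw [Finset.sum_pair hne.symm] at hle
        obtain ⟨ω, rfl⟩ := Quotient.exists_rep o
        obtain ⟨m, d, -⟩ := h.orbData p ω
        have hh := d.half hp hpos
        have := Nat.mul_le_mul_left (Nat.card (MulAction.orbit L ω1)) hω1
        have g0 : N0 * 5 ≤ Nat.card L := by rw [f0]; exact Nat.mul_le_mul_left _ hc5
        change _ ≤ 2 * kO L (Quotient.mk'' ω : MulAction.orbitRel.Quotient L Ω) at hh
        change _ + kO L (Quotient.mk'' ω : MulAction.orbitRel.Quotient L Ω) ≤ _ at hle
        omega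
    by_cases hQ2 : parQ L ω1 = 2
    · left
      rw [hQ2] at key
      rw [f0]
      congr 1
      omega
    right
    have hQ3 : 3 ≤ parQ L ω1 := by omega
    refine ⟨ω1, hω1, ?_⟩
    by_cases hN1 : Nat.card (MulAction.orbit L ω1) = 1
    · left
      rw [hN1] at key hcard
      have : N0 = parQ L ω1 := by omega
      rw [f0, this, one_mul] at hcard
      have := Nat.eq_of_mul_eq_mul_left (by omega) hcard
      rw [this]
      exact hdvd
    · right
      refine ⟨m1, hQ3, hcard, ?_⟩
      apply arith_core _ _ _ _ hQ3 hdvd hcop (by omega)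
      rw [mul_comm, ← hcard, f0, mul_comm]
      congr 1
      obtain ⟨R, hR⟩ : ∃ R, parQ L ω1 = R + 3 := ⟨parQ L ω1 - 3, by omega⟩
      rw [hR] at key ⊢
      have e1 : R + 3 - 2 = R + 1 := by omega
      rw [e1]
      nlinarith
  · have hpar1 : ∀ ω : Ω, parQ L ω = 1 := by
      intro ω
      have := parQ_pos L ω
      by_contra hh
      exact hpar ⟨ω, by omega⟩
    rcases sum_extend (kO L (Ω := Ω)) {o0} with hs | ⟨o, ho, hpos1, hle⟩
    · left
      rw [Finset.sum_singleton] at hs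
      have : N0 = 1 := by
        have := d0.Npos
        omega
      rw [f0, this, one_mul]
    · obtain ⟨ω1, rfl⟩ := Quotient.exists_rep o
      change 0 < kO L (Quotient.mk'' ω1 : MulAction.orbitRel.Quotient L Ω) at hpos1
      change _ + kO L (Quotient.mk'' ω1 : MulAction.orbitRel.Quotient L Ω) ≤ _ at hle
      change (Quotient.mk'' ω1 : MulAction.orbitRel.Quotient L Ω) ∉ _ at ho
      obtain ⟨s1, d1, -⟩ := h.orbData p ω1
      set o1 : MulAction.orbitRel.Quotient L Ω := Quotient.mk'' ω1 with ho1
      rw [Finset.mem_singleton] at ho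
      rw [hpar1] at d1
      generalize Nat.card (MulAction.orbit L ω1) = N1 at d1
      obtain ⟨e1, f1⟩ := d1.one
      have hp1 := d1.Npos
      have hp0 := d0.Npos
      rcases sum_extend (kO L (Ω := Ω)) {o0, o1} with hs | ⟨o, ho', hpos2, hle2⟩
      · left
        rw [Finset.sum_pair (Ne.symm ho)] at hs
        have : N0 = 1 := by omega
        rw [f0, this, one_mul]
      · right; left
        obtain ⟨ω2, rfl⟩ := Quotient.exists_rep o
        change 0 < kO L (Quotient.mk'' ω2 : MulAction.orbitRel.Quotient L Ω) at hpos2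
        change _ + kO L (Quotient.mk'' ω2 : MulAction.orbitRel.Quotient L Ω) ≤ _ at hle2
        change (Quotient.mk'' ω2 : MulAction.orbitRel.Quotient L Ω) ∉ _ at ho'
        obtain ⟨s2, d2, -⟩ := h.orbData p ω2
        set o2 : MulAction.orbitRel.Quotient L Ω := Quotient.mk'' ω2 with ho2
        rw [hpar1] at d2
        generalize Nat.card (MulAction.orbit L ω2) = N2 at d2
        obtain ⟨e2, f2⟩ := d2.one
        have hsum3 : ∑ o ∈ {o2, o0, o1}, kO L o = kO L o2 + (kO L o0 + kO L o1) := by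
          rw [Finset.sum_insert ho', Finset.sum_pair (Ne.symm ho)]
        have hh1 := d1.half hp hpos1
        have hh2 := d2.half hp hpos2
        have g0 : N0 * 5 ≤ Nat.card L := by rw [f0]; exact Nat.mul_le_mul_left _ hc5
        apply ell_arith p (Nat.card L) _ _ c s1 s2 N0 N1 N2 hp hc7 f0 d1 d2 hpos1 hpos2
        rcases sum_extend (kO L (Ω := Ω)) {o2, o0, o1} with hs | ⟨o, ho3, hpos3, hle3⟩
        · omega
        · exfalso
          obtain ⟨ω3, rfl⟩ := Quotient.exists_rep o
          obtain ⟨s3, d3, -⟩ := h.orbData p ω3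
          have hh3 := d3.half hp hpos3
          change _ ≤ 2 * kO L (Quotient.mk'' ω3 : MulAction.orbitRel.Quotient L Ω) at hh3
          change _ + kO L (Quotient.mk'' ω3 : MulAction.orbitRel.Quotient L Ω) ≤ _ at hle3
          omega

end

section
theorem MobAct.coreB {E L Ω : Type*} [Field E] [Finite E] (p : ℕ) [Fact p.Prime] [CharP E p]
    [Group L] [Fintype L] [MulAction L Ω] [Fintype Ω]
    [FaithfulSMul L Ω] (h : MobAct E L Ω) (ω1 : Ω) (hQ : 4 ≤ parQ L ω1)
    (hN : 2 ≤ Nat.card (MulAction.orbit L ω1)) :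
    ∃ c, ParCase L ω1 c := by
  classical
  have : Fintype (MulAction.orbitRel.Quotient L Ω) := Fintype.ofFinite _
  have hp : p.Prime := Fact.out
  have hsum := h.sum_kO p
  obtain ⟨m1, d1, hm1⟩ := h.orbData p ω1
  set o1 : MulAction.orbitRel.Quotient L Ω := Quotient.mk'' ω1 with ho1
  have hgpos : 0 < Nat.card L := Nat.card_pos
  have e1 := d1.full (by omega)
  have hcard := d1.card
  generalize hN1 : Nat.card (MulAction.orbit L ω1) = N1 at *
  have hNQ : N1 * 4 ≤ N1 * parQ L ω1 := Nat.mul_le_mul_left _ hQ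
  rcases sum_extend (kO L (Ω := Ω)) {o1} with hs | ⟨o, ho, hpos2, hle⟩
  · exfalso
    rw [Finset.sum_singleton] at hs
    have h3 : N1 * parQ L ω1 ≤ N1 * (parQ L ω1 * m1) :=
      Nat.mul_le_mul_left _ (Nat.le_mul_of_pos_right _ d1.mpos)
    omega
  · obtain ⟨ω2, rfl⟩ := Quotient.exists_rep o
    change 0 < kO L (Quotient.mk'' ω2 : MulAction.orbitRel.Quotient L Ω) at hpos2
    change _ + kO L (Quotient.mk'' ω2 : MulAction.orbitRel.Quotient L Ω) ≤ _ at hle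
    change (Quotient.mk'' ω2 : MulAction.orbitRel.Quotient L Ω) ∉ _ at ho
    obtain ⟨c, d2, hc⟩ := h.orbData p ω2
    set o2 : MulAction.orbitRel.Quotient L Ω := Quotient.mk'' ω2 with ho2
    rw [Finset.sum_singleton] at hle
    rw [Finset.mem_singleton] at ho
    have hQ2 : parQ L ω2 = 1 := by
      by_contra hne
      have h3 := parQ_pos L ω2
      have h4 : 1 < parQ L ω2 := by omega
      have h5 := d2.full h4
      have h6 := Nat.mul_le_mul_left (Nat.card (MulAction.orbit L ω2)) h4
      omega
    rw [hQ2] at d2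
    obtain ⟨e2, f2⟩ := d2.one
    generalize hN2 : Nat.card (MulAction.orbit L ω2) = N2 at *
    have hh2 := d2.half hp hpos2
    have key : N2 + 2 * N1 = 2 + N1 * parQ L ω1 := by
      rcases sum_extend (kO L (Ω := Ω)) {o1, o2} with hs | ⟨o, ho', hpos3, hle3⟩
      · rw [Finset.sum_pair (Ne.symm ho)] at hs
        omega
      · exfalso
        rw [Finset.sum_pair (Ne.symm ho)] at hle3
        obtain ⟨ω3, rfl⟩ := Quotient.exists_rep o
        obtain ⟨s3, d3, -⟩ := h.orbData p ω3
        have hh3 := d3.half hp hpos3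
        change _ ≤ 2 * kO L (Quotient.mk'' ω3 : MulAction.orbitRel.Quotient L Ω) at hh3
        change _ + kO L (Quotient.mk'' ω3 : MulAction.orbitRel.Quotient L Ω) ≤ _ at hle3
        omega
    refine ⟨c, m1, by omega, by rw [hN1]; exact hcard, ?_⟩
    rw [hN1]
    have hcop : Nat.Coprime (parQ L ω1) c := by
      obtain ⟨a, ha⟩ := d1.ppow
      rw [ha]
      exact Nat.Coprime.pow_left _ d2.cop.symm
    apply arith_core _ _ _ _ (by omega) d1.dvd hcop hN
    rw [mul_comm, ← hcard, f2, mul_comm]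
    congr 1
    obtain ⟨R, hR⟩ : ∃ R, parQ L ω1 = R + 3 := ⟨parQ L ω1 - 3, by omega⟩
    rw [hR] at key ⊢
    have e1 : R + 3 - 2 = R + 1 := by omega
    rw [e1]
    nlinarith

theorem MobAct.cyclic_stab {E L Ω : Type*} [Field E] [Finite E] (p : ℕ) [Fact p.Prime] [CharP E p]
    [Group L] [Fintype L] [MulAction L Ω]
    [FaithfulSMul L Ω] (h : MobAct E L Ω) (ω : Ω) (hQ : parQ L ω = 1) :
    IsCyclic (MulAction.stabilizer L ω) := by
  obtain ⟨χ, -, -, h1, -⟩ := h.local2 p ω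
  rw [hQ] at h1
  have h2 : Function.Injective χ := by
    rw [← MonoidHom.ker_eq_bot_iff]
    exact Subgroup.card_eq_one.1 h1
  have h3 : Function.Injective ((Units.coeHom E).comp χ) := by
    rw [MonoidHom.coe_comp]
    exact Function.Injective.comp Units.val_injective h2
  exact isCyclic_of_injective_ringHom _ h3

theorem MobAct.parQ_dvd {E L Ω : Type*} [Field E] [Finite E] (p : ℕ) [Fact p.Prime] [CharP E p]
    [Group L] [Fintype L] [MulAction L Ω]
    [FaithfulSMul L Ω] (h : MobAct E L Ω) (ω : Ω) :
    parQ L ω ∣ Nat.card L ∧ ∃ a, parQ L ω = p ^ a := by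
  obtain ⟨χ, -, -, -, -, h1, h2, -⟩ := h.local2 p ω
  refine ⟨?_, h1⟩
  exact (Dvd.intro _ h2.symm).trans (Subgroup.card_subgroup_dvd_card _)

theorem mem_of_index_le_two {G : Type*} [Group G] (A : Subgroup G) (hA : A.index = 2) (x : G)
    (hx : Odd (orderOf x)) : x ∈ A := by
  have h1 : x * x ∈ A := Subgroup.mul_self_mem_of_index_two hA x
  obtain ⟨k, hk⟩ := hx
  have h2 : x = ((x * x) ^ k)⁻¹ := by
    rw [eq_inv_iff_mul_eq_one, ← pow_two, ← pow_mul, ← pow_succ', ← hk, pow_orderOf_eq_one]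
  rw [h2]
  exact A.inv_mem (A.pow_mem h1 k)

theorem zpowers_eq_of_cyclic {G : Type*} [Group G] [Finite G] (A : Subgroup G) (hA : IsCyclic A) (x y : G)
    (hx : x ∈ A) (hy : y ∈ A) (hxy : orderOf x = orderOf y) :
    Subgroup.zpowers x = Subgroup.zpowers y := by
  have h1 : Subgroup.zpowers (⟨x, hx⟩ : A) = Subgroup.zpowers (⟨y, hy⟩ : A) := by
    have h3 : ∀ z : A, orderOf z = orderOf x →
        (Subgroup.zpowers z : Set A) = {a : A | a ^ orderOf x = 1} := by
      classical
      have : Fintype A := Fintype.ofFinite _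
      intro z hz
      apply Set.eq_of_subset_of_ncard_le
      · intro a ha
        obtain ⟨k, rfl⟩ := Subgroup.mem_zpowers_iff.1 ha
        rw [Set.mem_ofPred_eq, ← hz, ← zpow_natCast, zpow_comm, zpow_natCast, pow_orderOf_eq_one,
          one_zpow]
      · have h4 : (Subgroup.zpowers z : Set A).ncard = orderOf x := by
          rw [← Nat.card_coe_set_eq]
          exact (Nat.card_zpowers z).trans hz
        rw [h4]
        have h5 := IsCyclic.card_pow_eq_one_le (α := A) (orderOf_pos x)
        rw [Set.ncard_eq_toFinset_card']
        convert h5 using 2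
        ext a
        simp
      · exact Set.toFinite _
    apply SetLike.coe_injective
    rw [h3 _ (Subgroup.orderOf_mk x hx), h3 _ ((Subgroup.orderOf_mk y hy).trans hxy.symm)]
  have h2 := congrArg (Subgroup.map A.subtype) h1
  rw [MonoidHom.map_zpowers, MonoidHom.map_zpowers] at h2
  exact h2

theorem MobAct.genA {E L Ω : Type*} [Field E] [Finite E] (p : ℕ) [Fact p.Prime] [CharP E p]
    [Group L] [Fintype L] [MulAction L Ω] [Fintype Ω]
    [FaithfulSMul L Ω] (h : MobAct E L Ω) (n : ℕ) (hodd : Odd n) (hn7 : 7 ≤ n ∨ (5 ≤ n ∧ p ≤ 3))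
    (hnp : Nat.Coprime n p) (hdiv : ∀ a, p ^ a ∣ Nat.card L → n ∣ p ^ a - 1 → p ^ a = 1)
    (x y : L) (hx : orderOf x = n) (hy : orderOf y = n)
    (hxy : Subgroup.zpowers x ≠ Subgroup.zpowers y) :
    (∃ ω : Ω, n ∣ parQ L ω + 1 ∧ 3 ≤ parQ L ω ∧
      (parQ L ω + 1) * parQ L ω * (parQ L ω - 1) ≤ 2 * Nat.card L ∧
      Nat.card (MulAction.orbit L ω) = parQ L ω + 1) ∨
    (n = 5 ∧ p = 3 ∧ Nat.card L = 60 ∧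
      ∃ ω : Ω, parQ L ω = 3 ∧ Nat.card (MulAction.orbit L ω) = 10) := by
  obtain ⟨ω0, hω0⟩ := h.fix x
  have hp : p.Prime := Fact.out
  have hdvd : n ∣ Nat.card (MulAction.stabilizer L ω0) := by
    rw [← hx, ← Subgroup.orderOf_mk x (show x ∈ MulAction.stabilizer L ω0 from hω0)]
    exact orderOf_dvd_natCard _
  have hQ1 : ∀ ω : Ω, n ∣ parQ L ω - 1 → parQ L ω = 1 := by
    intro ω h1
    obtain ⟨h2, a, ha⟩ := h.parQ_dvd p ω
    rw [ha] at h1 h2 ⊢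
    exact hdiv a h2 h1
  have hQ0 : parQ L ω0 = 1 := by
    apply hQ1
    obtain ⟨m, d, hm⟩ := h.orbData p ω0
    rw [hm] at hdvd
    obtain ⟨a, ha⟩ := d.ppow
    have hc : Nat.Coprime n (parQ L ω0) := by
      rw [ha]
      exact Nat.Coprime.pow_right _ hnp
    exact (hc.dvd_of_dvd_mul_left hdvd).trans d.dvd
  have hcyc := h.cyclic_stab p ω0 hQ0
  have hcpos : 0 < Nat.card (MulAction.stabilizer L ω0) := Nat.card_pos
  have hnc := Nat.le_of_dvd hcpos hdvd
  have hidx := Subgroup.card_mul_index (MulAction.stabilizer L ω0)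
  have hfin : ∀ y : L, orderOf y = n → (Nat.card L = Nat.card (MulAction.stabilizer L ω0) ∨
      Nat.card L = 2 * Nat.card (MulAction.stabilizer L ω0)) →
      y ∈ MulAction.stabilizer L ω0 := by
    rintro y hy (h1 | h1)
    · rw [h1] at hidx
      have h2 : (MulAction.stabilizer L ω0).index = 1 := by
        apply Nat.eq_of_mul_eq_mul_left hcpos
        rw [hidx, mul_one]
      rw [Subgroup.index_eq_one.1 h2]
      exact Subgroup.mem_top y
    · rw [h1, mul_comm 2] at hidx
      apply mem_of_index_le_two _ (Nat.eq_of_mul_eq_mul_left hcpos hidx)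
      rw [hy]
      exact hodd
  rcases h.coreA p ω0 _ rfl hQ0 (by omega) with h1 | h1 | ⟨ω1, hω1, h1 | h1⟩
  · exact absurd (zpowers_eq_of_cyclic _ hcyc x y hω0 (hfin y hy (Or.inl h1)) (hx.trans hy.symm)) hxy
  · exact absurd (zpowers_eq_of_cyclic _ hcyc x y hω0 (hfin y hy (Or.inr h1)) (hx.trans hy.symm)) hxy
  · have := hQ1 ω1 (hdvd.trans h1)
    omega
  · obtain ⟨m, hQ3, hcard, ⟨hN, h2⟩ | ⟨h2, h3, h4, h5⟩⟩ := h1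
    · left
      refine ⟨ω1, ?_, hQ3, ?_, hN⟩
      · rcases h2 with ⟨h2, -⟩ | ⟨h2, -⟩
        · rw [← h2]
          exact hdvd.mul_left 2
        · rw [← h2]
          exact hdvd
      · rw [hcard, hN]
        have h3 : parQ L ω1 - 1 ≤ 2 * m := by omega
        calc (parQ L ω1 + 1) * parQ L ω1 * (parQ L ω1 - 1)
            ≤ (parQ L ω1 + 1) * parQ L ω1 * (2 * m) := Nat.mul_le_mul_left _ h3
          _ = _ := by ring
    · right
      refine ⟨?_, ?_, ?_, ω1, h2, h5⟩
      · have := Nat.le_of_dvd hcpos hdvd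
        omega
      · obtain ⟨-, a, ha⟩ := h.parQ_dvd p ω1
        rw [h2] at ha
        have h6 : p ∣ p ^ a := by
          apply dvd_pow_self
          rintro rfl
          simp at ha
        rw [← ha] at h6
        exact (Nat.prime_dvd_prime_iff_eq hp Nat.prime_three).1 h6
      · rw [hcard, h5, h2, h4]

theorem MobAct.exists_order {E S Ω : Type*} [Field E] [Finite E] (p : ℕ) [Fact p.Prime] [CharP E p]
    [Group S] [Fintype S] [MulAction S Ω] [Fintype Ω]
    [FaithfulSMul S Ω] (h : MobAct E S Ω) (r j : ℕ) (hr : r.Prime) (hrp : r ≠ p) (hr2 : r ≠ 2)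
    (hj : 0 < j) (hd : r ^ j ∣ Nat.card S) : ∃ x : S, orderOf x = r ^ j := by
  classical
  have hp : p.Prime := Fact.out
  have : Fact r.Prime := ⟨hr⟩
  obtain ⟨R, hR⟩ := Sylow.exists_subgroup_card_pow_prime r hd
  have : Fintype R := Fintype.ofFinite _
  have hM : MobAct E R Ω := h.subgroup R
  have hpg : IsPGroup r R := IsPGroup.of_card hR
  have hnt : Nontrivial R := by
    rw [← Finite.one_lt_card_iff_nontrivial, hR]
    exact Nat.one_lt_pow hj.ne' hr.one_lt
  have hct := hpg.center_nontrivial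
  obtain ⟨z, hz⟩ := exists_ne (1 : Subgroup.center R)
  have hz1 : (z : R) ≠ 1 := fun hh => hz (Subtype.ext hh)
  have hzc : ∀ g : R, g * z = z * g := fun g => (Subgroup.mem_center_iff.1 z.2 g)
  obtain ⟨ω, hω⟩ := hM.fix z
  have hQ : parQ R ω = 1 := by
    obtain ⟨h1, a, ha⟩ := hM.parQ_dvd p ω
    rw [ha, hR] at h1
    have h2 : Nat.Coprime (p ^ a) (r ^ j) :=
      Nat.Coprime.pow _ _ ((Nat.coprime_primes hp hr).2 hrp.symm)
    rw [ha]
    exact Nat.Coprime.eq_one_of_dvd h2 h1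
  have hcyc := hM.cyclic_stab p ω hQ
  have hstab : MulAction.stabilizer R ω = ⊤ := by
    obtain ⟨χ, -, h2, h3, -⟩ := hM.local p ω
    have hsub : ∃ ω', MulAction.orbit R ω ⊆ {ω, ω'} := by
      by_cases hχ : χ ⟨z, hω⟩ = 1
      · refine ⟨ω, ?_⟩
        rintro _ ⟨g, rfl⟩
        left
        apply h2 ⟨z, hω⟩ (fun hh => hz1 (congrArg Subtype.val hh)) hχ
        change (z : R) • g • ω = g • ω
        rw [smul_smul, ← hzc, mul_smul, hω]
      · obtain ⟨ω', -, h4⟩ := h3 _ hχ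
        refine ⟨ω', ?_⟩
        rintro _ ⟨g, rfl⟩
        apply (h4 _).1
        change (z : R) • g • ω = g • ω
        rw [smul_smul, ← hzc, mul_smul, hω]
    obtain ⟨ω', hsub⟩ := hsub
    have h5 : (MulAction.orbit R ω).ncard ≤ 2 :=
      (Set.ncard_le_ncard hsub (Set.toFinite _)).trans (by
        have := Set.ncard_insert_le ω {ω'}
        rw [Set.ncard_singleton] at this
        exact this)
    rw [← MulAction.index_stabilizer] at h5
    have h6 := Subgroup.index_dvd_card (MulAction.stabilizer R ω)
    rw [hR] at h6
    obtain ⟨i, -, hi⟩ := (Nat.dvd_prime_pow hr).1 h6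
    apply Subgroup.index_eq_one.1
    rw [hi] at h5 ⊢
    by_contra hne
    have hi0 : i ≠ 0 := by
      rintro rfl
      simp at hne
    have h7 : r ≤ r ^ i := Nat.le_self_pow hi0 r
    have := hr.two_le
    omega
  obtain ⟨g, hg⟩ := hcyc.exists_ofOrder_eq_natCard
  have hcd : Nat.card (MulAction.stabilizer R ω) = r ^ j := by
    rw [hstab, Subgroup.card_top, hR]
  rw [hcd] at hg
  refine ⟨g.1.1, ?_⟩
  rw [← hg, Subgroup.orderOf_coe, Subgroup.orderOf_coe]

end

section
theorem MobAct.chi_one {E L Ω : Type*} [Field E] [Finite E] (p : ℕ) [Fact p.Prime] [CharP E p]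
    [Group L] [MulAction L Ω] {ω : Ω} (χ : MulAction.stabilizer L ω →* Eˣ)
    (g : MulAction.stabilizer L ω) (hg : g ^ p = 1) : χ g = 1 := by
  have h1 : (χ g) ^ p = 1 := by rw [← map_pow, hg, map_one]
  have h2 : ((χ g : Eˣ) : E) ^ p = 1 := by
    rw [← Units.val_pow_eq_pow_val, h1, Units.val_one]
  ext
  rw [Units.val_one]
  have h3 : (((χ g : Eˣ) : E) - 1) ^ p = 0 := by
    rw [sub_pow_char, h2, one_pow, sub_self]
  exact sub_eq_zero.1 (pow_eq_zero_iff (Nat.Prime.ne_zero Fact.out) |>.1 h3)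

theorem MobAct.mem_parSet {E L Ω : Type*} [Field E] [Finite E] (p : ℕ) [Fact p.Prime] [CharP E p]
    [Group L] [Fintype L] [MulAction L Ω]
    [FaithfulSMul L Ω] (h : MobAct E L Ω) (ω : Ω) (g : L) (hg : orderOf g = p) (hω : g • ω = ω) :
    g ∈ parSet L ω := by
  have hp : p.Prime := Fact.out
  obtain ⟨χ, -, h1, -⟩ := h.local2 p ω
  have h2 := MobAct.chi_one p χ ⟨g, hω⟩ (by
    apply Subtype.ext
    change g ^ p = 1
    rw [← hg, pow_orderOf_eq_one])
  rcases (h1 _).1 h2 with h3 | h3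
  · exfalso
    have : g = 1 := congrArg Subtype.val h3
    rw [this, orderOf_one] at hg
    exact hp.one_lt.ne hg
  · exact h3

theorem MobAct.order_of_parSet {E L Ω : Type*} [Field E] [Finite E] (p : ℕ) [Fact p.Prime]
    [CharP E p] [Group L] [Fintype L] [MulAction L Ω]
    [FaithfulSMul L Ω] (h : MobAct E L Ω) (ω : Ω) (g : L) (hg : g ∈ parSet L ω) :
    orderOf g = p := by
  obtain ⟨χ, h0, h1, -⟩ := h.local2 p ω
  have h2 := h0 ⟨g, hg.2.1⟩ ((h1 _).2 (Or.inr hg))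
  exact orderOf_eq_prime (congrArg Subtype.val h2) hg.1

theorem MobAct.genB {E L Ω : Type*} [Field E] [Finite E] (p : ℕ) [Fact p.Prime] [CharP E p]
    [Group L] [Fintype L] [MulAction L Ω] [Fintype Ω]
    [FaithfulSMul L Ω] (h : MobAct E L Ω) (hp5 : 5 ≤ p) (hpp : ¬ p ^ 2 ∣ Nat.card L)
    (x y : L) (hx : orderOf x = p) (hy : orderOf y = p)
    (hxy : Subgroup.zpowers x ≠ Subgroup.zpowers y) :
    (p + 1) * p * (p - 1) ≤ 2 * Nat.card L := by
  have hp : p.Prime := Fact.out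
  obtain ⟨ω, hω⟩ := h.fix x
  have hxp := h.mem_parSet p ω x hx hω
  obtain ⟨h1, a, ha⟩ := h.parQ_dvd p ω
  have hQ : parQ L ω = p := by
    have h2 : 1 < parQ L ω := by
      have : 0 < (parSet L ω).ncard := (Set.ncard_pos (Set.toFinite _)).2 ⟨x, hxp⟩
      unfold parQ
      omega
    have ha2 : a < 2 := by
      by_contra hlt
      push Not at hlt
      apply hpp
      exact (pow_dvd_pow p hlt).trans (ha ▸ h1)
    have ha0 : a ≠ 0 := by
      rintro rfl
      rw [ha] at h2
      simp at h2
    have : a = 1 := by omega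
    rw [ha, this, pow_one]
  have hN : 2 ≤ Nat.card (MulAction.orbit L ω) := by
    by_contra hlt
    have hst : MulAction.stabilizer L ω = ⊤ := by
      apply Subgroup.index_eq_one.1
      have h2 := Subgroup.index_ne_zero_of_finite (H := MulAction.stabilizer L ω)
      rw [Nat.card_coe_set_eq, ← MulAction.index_stabilizer] at hlt
      omega
    have hyω : y • ω = ω := by
      have : y ∈ MulAction.stabilizer L ω := by rw [hst]; exact Subgroup.mem_top y
      exact this
    have hyp := h.mem_parSet p ω y hy hyω
    obtain ⟨χ, -, h2, h3, -⟩ := h.local2 p ω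
    rw [hQ] at h3
    have h4 : Nat.card (χ.ker.map (MulAction.stabilizer L ω).subtype) = p := by
      rw [Subgroup.card_map_of_injective (Subgroup.subtype_injective _), h3]
    apply hxy
    apply zpowers_eq_of_cyclic (χ.ker.map (MulAction.stabilizer L ω).subtype)
      (isCyclic_of_prime_card h4) x y _ _ (hx.trans hy.symm)
    · exact ⟨⟨x, hω⟩, (h2 _).2 (Or.inr hxp), rfl⟩
    · exact ⟨⟨y, hyω⟩, (h2 _).2 (Or.inr hyp), rfl⟩
  obtain ⟨c, m, h2, hcard, ⟨hNN, h3⟩ | ⟨h3, -⟩⟩ := h.coreB p ω (by omega) hN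
  · rw [hcard, hNN, hQ]
    rw [hQ] at h3
    have h4 : p - 1 ≤ 2 * m := by omega
    calc (p + 1) * p * (p - 1) ≤ (p + 1) * p * (2 * m) := Nat.mul_le_mul_left _ h4
      _ = _ := by ring
  · omega

end

section
open Polynomial in
theorem cyc_dvd (p d n : ℕ) (hd : d ∈ n.properDivisors) :
    ((p : ℤ) ^ d - 1) * (cyclotomic n ℤ).eval (p : ℤ) ∣ (p : ℤ) ^ n - 1 := by
  have h1 := X_pow_sub_one_mul_cyclotomic_dvd_X_pow_sub_one_of_dvd ℤ hd
  have h2 := eval_dvd (x := (p : ℤ)) h1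
  simpa using h2

theorem pow_eq_one_zmod (p n a : ℕ) (hp : 0 < p) : n ∣ p ^ a - 1 ↔ (p : ZMod n) ^ a = 1 := by
  have h1 : 1 ≤ p ^ a := Nat.one_le_pow _ _ hp
  rw [← Nat.cast_pow, ← ZMod.natCast_eq_zero_iff, Nat.cast_sub h1, sub_eq_zero, Nat.cast_one]

open Polynomial in
theorem exists_n_three (p f : ℕ) (hp : p.Prime) (hf : 3 ≤ f) :
    ∃ r j, r.Prime ∧ r ≠ 2 ∧ 0 < j ∧ r ^ j ∣ p ^ f + 1 ∧ 7 ≤ r ^ j ∧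
      ∀ a, r ^ j ∣ p ^ a - 1 → 2 * f ∣ a := by
  have hp2 := hp.two_le
  set v : ℤ := (cyclotomic (2 * f) ℤ).eval (p : ℤ) with hv
  have hpf1 : 1 < p ^ f := Nat.one_lt_pow (by omega) hp.one_lt
  have hp1 : (1 : ℤ) < (p : ℤ) ^ f := by exact_mod_cast hpf1
  have hvf : v ∣ (p : ℤ) ^ f + 1 := by
    have h1 := cyc_dvd p f (2 * f) (by
      rw [Nat.mem_properDivisors]; exact ⟨dvd_mul_left _ _, by omega⟩)
    have h2 : (p : ℤ) ^ (2 * f) - 1 = ((p : ℤ) ^ f - 1) * ((p : ℤ) ^ f + 1) := by ring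
    rw [h2] at h1
    exact (mul_dvd_mul_iff_left (by omega)).1 h1
  have hphi : 2 ≤ (2 * f).totient := by
    have h1 := Nat.totient_even (n := 2 * f) (by omega)
    have h2 := Nat.totient_pos.2 (show 0 < 2 * f by omega)
    obtain ⟨k, hk⟩ := h1
    omega
  have hvgt : ((p : ℤ) - 1) ^ (2 * f).totient < v := by
    have h1 := sub_one_pow_totient_lt_cyclotomic_eval (n := 2 * f) (q := (p : ℝ)) (by omega)
      (by exact_mod_cast hp.one_lt)
    have h2 : (cyclotomic (2 * f) ℝ).eval (p : ℝ) = ((v : ℤ) : ℝ) := by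
      rw [hv, ← map_cyclotomic_int, eval_map, eval₂_at_natCast]
      rfl
    rw [h2] at h1
    exact_mod_cast h1
  -- an odd prime dividing v
  have hodd : ∃ r : ℕ, r.Prime ∧ r ≠ 2 ∧ (r : ℤ) ∣ v := by
    by_cases hov : Odd v
    · have h1 : 1 < v := by
        have : 1 ≤ ((p : ℤ) - 1) ^ (2 * f).totient := one_le_pow₀ (by omega)
        omega
      have h2 : v.natAbs ≠ 1 := by omega
      obtain ⟨r, hr, hrd⟩ := Nat.exists_prime_and_dvd h2
      refine ⟨r, hr, ?_, Int.natCast_dvd.2 hrd⟩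
      rintro rfl
      have : (2 : ℤ) ∣ v := Int.natCast_dvd.2 hrd
      rw [← Int.not_even_iff_odd, even_iff_two_dvd] at hov
      exact hov this
    · rw [Int.not_odd_iff_even] at hov
      have hpodd : Odd p := by
        rcases hp.eq_two_or_odd' with rfl | h
        · exfalso
          have h1 : Even ((2 : ℤ) ^ f + 1) := hov.trans_dvd (by exact_mod_cast hvf)
          rw [Int.even_add_one] at h1
          exact h1 (Even.pow_of_ne_zero (by decide) (by omega))
        · exact h
      have hfe : Even f := by
        by_contra hfo
        rw [Nat.not_even_iff_odd] at hfo
        have h1 := cyc_dvd p 2 (2 * f) (by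
          rw [Nat.mem_properDivisors]; exact ⟨dvd_mul_right _ _, by omega⟩)
        rw [pow_mul, ← mul_geom_sum ((p : ℤ) ^ 2) f] at h1
        have h2 : v ∣ ∑ i ∈ Finset.range f, ((p : ℤ) ^ 2) ^ i := by
          refine (mul_dvd_mul_iff_left (a := (p : ℤ) ^ 2 - 1) ?_).1 h1
          have : (4 : ℤ) ≤ (p : ℤ) ^ 2 := by
            have : (2 : ℤ) ≤ p := by exact_mod_cast hp2
            nlinarith
          omega
        have h3 : Even (∑ i ∈ Finset.range f, ((p : ℤ) ^ 2) ^ i) := hov.trans_dvd h2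
        have h4 : Odd (∑ i ∈ Finset.range f, ((p : ℤ) ^ 2) ^ i) := by
          have h5 : ∀ m : ℕ, Even (∑ i ∈ Finset.range m, ((p : ℤ) ^ 2) ^ i + m) := by
            intro m
            induction m with
            | zero => simp
            | succ m ih =>
              rw [Finset.sum_range_succ]
              push_cast
              have h6 : Odd (((p : ℤ) ^ 2) ^ m) := by
                apply Odd.pow
                apply Odd.pow
                exact_mod_cast hpodd
              have h7 : Even (((p : ℤ) ^ 2) ^ m + 1) := h6.add_odd odd_one
              have h8 := ih.add h7
              rw [add_add_add_comm]
              exact h8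
          have h9 := h5 f
          rw [Int.even_add, Int.even_coe_nat] at h9
          rw [← Int.not_even_iff_odd, h9, Nat.not_even_iff_odd]
          exact hfo
        exact (Int.not_even_iff_odd.2 h4) h3
      obtain ⟨w, hw⟩ := even_iff_two_dvd.1 hov
      have hw1 : Odd w := by
        rw [← Int.not_even_iff_odd]
        rintro hwe
        obtain ⟨u, hu⟩ := even_iff_two_dvd.1 hwe
        have h4 : (4 : ℤ) ∣ (p : ℤ) ^ f + 1 := by
          refine Dvd.dvd.trans ⟨u, ?_⟩ hvf
          rw [hw, hu]; ring
        obtain ⟨e, he⟩ := even_iff_two_dvd.1 hfe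
        obtain ⟨b, hb⟩ := hpodd.pow (n := e)
        rw [he, mul_comm, pow_mul] at h4
        have hb' : (p : ℤ) ^ e = 2 * b + 1 := by exact_mod_cast hb
        rw [hb'] at h4
        obtain ⟨t, ht⟩ := h4
        have : 4 * (b ^ 2 + b - t : ℤ) = -2 := by linarith
        omega
      have hw2 : 1 < w := by
        have hp3 : 3 ≤ p := by
          rcases hpodd with ⟨k, hk⟩
          omega
        have h1 : (2 : ℤ) ^ 2 ≤ ((p : ℤ) - 1) ^ (2 * f).totient := by
          calc (2 : ℤ) ^ 2 ≤ ((p : ℤ) - 1) ^ 2 := by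
                apply pow_le_pow_left₀ (by norm_num); omega
            _ ≤ _ := pow_le_pow_right₀ (by omega) hphi
        omega
      obtain ⟨r, hr, hrd⟩ := Nat.exists_prime_and_dvd (n := w.natAbs) (by omega)
      have hrw : (r : ℤ) ∣ w := Int.natCast_dvd.2 hrd
      refine ⟨r, hr, ?_, ?_⟩
      · rintro rfl
        rw [← Int.not_even_iff_odd, even_iff_two_dvd] at hw1
        exact hw1 hrw
      · rw [hw]; exact hrw.mul_left 2
  obtain ⟨r, hr, hr2, hrv⟩ := hodd
  have hrf : r ∣ p ^ f + 1 := by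
    have := hrv.trans hvf
    exact_mod_cast this
  have hbig : p ^ (2 * f) - 1 ≠ 0 := by
    have : 1 < p ^ (2 * f) := Nat.one_lt_pow (by omega) hp.one_lt
    omega
  have hfac : p ^ (2 * f) - 1 = (p ^ f - 1) * (p ^ f + 1) := by
    obtain ⟨t, ht⟩ : ∃ t, p ^ f = t + 1 := ⟨p ^ f - 1, by omega⟩
    rw [mul_comm, pow_mul, ht]
    have : (t + 1) ^ 2 = t * (t + 1 + 1) + 1 := by ring
    rw [this]
    simp
  obtain ⟨j, u, hu, hju⟩ := Nat.exists_eq_pow_mul_and_not_dvd hbig r hr.ne_one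
  have hjpos : 0 < j := by
    rcases Nat.eq_zero_or_pos j with rfl | h
    · exfalso
      rw [pow_zero, one_mul] at hju
      apply hu
      rw [← hju, hfac]
      exact hrf.mul_left _
    · exact h
  have hn1 : r ^ j ∣ p ^ (2 * f) - 1 := ⟨u, hju⟩
  set n := r ^ j with hn
  have hord : orderOf (p : ZMod n) = 2 * f := by
    have h1 : orderOf (p : ZMod n) ∣ 2 * f :=
      orderOf_dvd_of_pow_eq_one ((pow_eq_one_zmod p n _ hp.pos).1 hn1)
    by_contra hne
    have h2 : orderOf (p : ZMod n) ∈ (2 * f).properDivisors := by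
      rw [Nat.mem_properDivisors]
      exact ⟨h1, lt_of_le_of_ne (Nat.le_of_dvd (by omega) h1) hne⟩
    have h3 := cyc_dvd p _ _ h2
    have h4 : n ∣ p ^ orderOf (p : ZMod n) - 1 :=
      (pow_eq_one_zmod p n _ hp.pos).2 (pow_orderOf_eq_one _)
    have h5 : (n : ℤ) ∣ (p : ℤ) ^ orderOf (p : ZMod n) - 1 := by
      have := Int.natCast_dvd_natCast.2 h4
      rw [Nat.cast_sub (Nat.one_le_pow _ _ hp.pos)] at this
      exact_mod_cast this
    have h6 : ((n * r : ℕ) : ℤ) ∣ ((p ^ (2 * f) - 1 : ℕ) : ℤ) := by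
      rw [Nat.cast_sub (Nat.one_le_pow _ _ hp.pos)]
      push_cast
      exact (mul_dvd_mul h5 hrv).trans h3
    have h7 := Int.natCast_dvd_natCast.1 h6
    rw [hju] at h7
    exact hu ((mul_dvd_mul_iff_left (pow_ne_zero _ hr.ne_zero)).1 h7)
  have hn1' : 1 < n := Nat.one_lt_pow hjpos.ne' hr.one_lt
  refine ⟨r, j, hr, hr2, hjpos, ?_, ?_, ?_⟩
  · have h1 : Nat.Coprime n (p ^ f - 1) := by
      apply Nat.Coprime.pow_left
      rw [Nat.Prime.coprime_iff_not_dvd hr]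
      intro h2
      have h3 := Nat.dvd_sub hrf h2
      have h4 : p ^ f + 1 - (p ^ f - 1) = 2 := by omega
      rw [h4] at h3
      exact hr2 ((Nat.prime_dvd_prime_iff_eq hr Nat.prime_two).1 h3)
    rw [hfac] at hn1
    exact h1.dvd_of_dvd_mul_left hn1
  · have : NeZero n := ⟨by omega⟩
    have : Fact (1 < n) := ⟨hn1'⟩
    have h1 : IsUnit (p : ZMod n) := by
      apply IsUnit.of_pow_eq_one ((pow_eq_one_zmod p n _ hp.pos).1 hn1) (by omega)
    obtain ⟨U, hU⟩ := h1
    rw [← hU, orderOf_units] at hord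
    have h2 : orderOf U ≤ Fintype.card (ZMod n)ˣ := orderOf_le_card_univ
    rw [ZMod.card_units_eq_totient] at h2
    have h3 := Nat.totient_lt n hn1'
    omega
  · intro a ha
    rw [← hord]
    exact orderOf_dvd_of_pow_eq_one ((pow_eq_one_zmod p n _ hp.pos).1 ha)

theorem exists_n_two (p : ℕ) (hp : p.Prime) (hp3 : p ≠ 3) :
    ∃ r j, r.Prime ∧ r ≠ 2 ∧ 0 < j ∧ r ^ j ∣ p ^ 2 + 1 ∧ (7 ≤ r ^ j ∨ (5 ≤ r ^ j ∧ p ≤ 3)) ∧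
      ∀ a, r ^ j ∣ p ^ a - 1 → 2 * 2 ∣ a := by
  have key : ∀ r j, r.Prime → r ≠ 2 → 0 < j → r ^ j ∣ p ^ 2 + 1 →
      ∀ a, r ^ j ∣ p ^ a - 1 → 2 * 2 ∣ a := by
    intro r j hr hr2 hj h1 a h2
    have : Fact r.Prime := ⟨hr⟩
    have h3 : r ∣ p ^ 2 + 1 := (dvd_pow_self r hj.ne').trans h1
    have h4 : r ∣ p ^ a - 1 := (dvd_pow_self r hj.ne').trans h2
    have h5 : (p : ZMod r) ^ 2 = -1 := by
      have := (ZMod.natCast_eq_zero_iff _ _).2 h3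
      push_cast at this
      linear_combination this
    have h6 := (pow_eq_one_zmod p r a hp.pos).1 h4
    have : Fact (2 < r) := ⟨lt_of_le_of_ne hr.two_le (Ne.symm hr2)⟩
    have hneg : (-1 : ZMod r) ≠ 1 := ZMod.neg_one_ne_one
    have h8 : orderOf (p : ZMod r) = 2 ^ 2 := by
      apply orderOf_eq_prime_pow
      · rw [pow_one, h5]; exact hneg
      · have : (2 : ℕ) ^ (1 + 1) = 2 * 2 := by norm_num
        rw [this, pow_mul, h5]; ring
    have h9 := orderOf_dvd_of_pow_eq_one h6
    rw [h8] at h9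
    exact h9
  have hno3 : ¬ 3 ∣ p ^ 2 + 1 := by
    intro h
    have h1 : (p ^ 2 + 1) % 3 = 0 := Nat.mod_eq_zero_of_dvd h
    have h2 : p % 3 = 0 ∨ p % 3 = 1 ∨ p % 3 = 2 := by omega
    rcases h2 with h2 | h2 | h2 <;> simp [Nat.add_mod, Nat.pow_mod, h2] at h1
  rcases hp.eq_two_or_odd' with rfl | hpo
  · exact ⟨5, 1, by norm_num, by norm_num, by norm_num, by norm_num, by norm_num,
      key 5 1 (by norm_num) (by norm_num) (by norm_num) (by norm_num)⟩
  · have hp5 : 5 ≤ p := by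
      obtain ⟨k, hk⟩ := hpo
      have := hp.two_le
      omega
    have hp25 : 25 ≤ p ^ 2 := by nlinarith
    obtain ⟨w, hw, hwo⟩ : ∃ w, p ^ 2 + 1 = 2 * w ∧ ¬ 2 ∣ w := by
      obtain ⟨k, hk⟩ := hpo
      refine ⟨2 * k ^ 2 + 2 * k + 1, by rw [hk]; ring, ?_⟩
      omega
    by_cases h25 : 25 ∣ p ^ 2 + 1
    · have h25' : 5 ^ 2 ∣ p ^ 2 + 1 := h25
      exact ⟨5, 2, by norm_num, by norm_num, by norm_num, h25', by norm_num,
        key 5 2 (by norm_num) (by norm_num) (by norm_num) h25'⟩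
    · have : ∃ r, r.Prime ∧ r ∣ w ∧ r ≠ 5 := by
        by_cases h5 : 5 ∣ w
        · obtain ⟨u, hu⟩ := h5
          obtain ⟨r, hr, hru⟩ := Nat.exists_prime_and_dvd (n := u) (by omega)
          refine ⟨r, hr, hu ▸ hru.mul_left 5, ?_⟩
          rintro rfl
          apply h25
          obtain ⟨t, ht⟩ := hru
          exact ⟨2 * t, by rw [hw, hu, ht]; ring⟩
        · obtain ⟨r, hr, hrw⟩ := Nat.exists_prime_and_dvd (n := w) (by omega)
          exact ⟨r, hr, hrw, by rintro rfl; exact h5 hrw⟩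
      obtain ⟨r, hr, hrw, hr5⟩ := this
      have hr2 : r ≠ 2 := by rintro rfl; exact hwo hrw
      have hrd : r ∣ p ^ 2 + 1 := by rw [hw]; exact hrw.mul_left 2
      have hr3 : r ≠ 3 := by rintro rfl; exact hno3 hrd
      have hr7 : 7 ≤ r := by
        by_contra hlt
        have h2 := hr.two_le
        have : r = 4 ∨ r = 6 := by omega
        rcases this with rfl | rfl
        · exact absurd hr (by norm_num)
        · exact absurd hr (by norm_num)
      exact ⟨r, 1, hr, hr2, by norm_num, by rwa [pow_one], by rw [pow_one]; exact Or.inl hr7,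
        key r 1 hr hr2 (by norm_num) (by rwa [pow_one])⟩

theorem exists_n (p f : ℕ) (hp : p.Prime) (hf : 2 ≤ f) (h9 : p ^ f ≠ 9) :
    ∃ r j, r.Prime ∧ r ≠ 2 ∧ 0 < j ∧ r ^ j ∣ p ^ f + 1 ∧ (7 ≤ r ^ j ∨ (5 ≤ r ^ j ∧ p ≤ 3)) ∧
      ∀ a, r ^ j ∣ p ^ a - 1 → 2 * f ∣ a := by
  rcases Nat.lt_or_ge f 3 with h | h
  · have : f = 2 := by omega
    subst this
    apply exists_n_two p hp
    rintro rfl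
    norm_num at h9
  · obtain ⟨r, j, h1, h2, h3, h4, h5, h6⟩ := exists_n_three p f hp h
    exact ⟨r, j, h1, h2, h3, h4, Or.inl h5, h6⟩

end

section
open Matrix

theorem aff_of_fix_infty {E : Type*} [Field E] [DecidableEq E] (G : GL (Fin 2) E)
    (hG : G • (OnePoint.infty : OnePoint E) = OnePoint.infty) :
    ∃ (a : Eˣ) (b : E), ∀ z : E, G • (z : OnePoint E) = ((a * z + b : E) : OnePoint E) := by
  have h10 : G 1 0 = 0 := OnePoint.smul_infty_eq_self_iff.1 hG
  have hdet : G 0 0 * G 1 1 ≠ 0 := by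
    have := G.det_ne_zero
    rw [Matrix.det_fin_two, h10, mul_zero, sub_zero] at this
    exact this
  have h0 := left_ne_zero_of_mul hdet
  have h1 := right_ne_zero_of_mul hdet
  refine ⟨Units.mk0 (G 0 0 / G 1 1) (div_ne_zero h0 h1), G 0 1 / G 1 1, ?_⟩
  intro z
  rw [OnePoint.smul_some_eq_ite, h10, zero_mul, zero_add, if_neg h1]
  congr 1
  rw [Units.val_mk0]
  field_simp

theorem exists_to_infty {E : Type*} [Field E] [DecidableEq E] (ω : OnePoint E) :
    ∃ γ : GL (Fin 2) E, γ • ω = OnePoint.infty := by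
  induction ω with
  | infty => exact ⟨1, one_smul _ _⟩
  | coe z =>
    refine ⟨Matrix.GeneralLinearGroup.mkOfDetNeZero !![0, 1; 1, -z] (by simp [Matrix.det_fin_two]), ?_⟩
    rw [OnePoint.smul_some_eq_ite, if_pos]
    simp [Matrix.GeneralLinearGroup.mkOfDetNeZero]

theorem chart_GL {E : Type*} [Field E] [DecidableEq E] (ω : OnePoint E) :
    ∃ e : OnePoint E ≃ Option E, e ω = none ∧ ∀ G : GL (Fin 2) E, G • ω = ω →
    ∃ (a : Eˣ) (b : E), ∀ z : E, e (G • e.symm (some z)) = some (a * z + b) := by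
  obtain ⟨γ, hγ⟩ := exists_to_infty ω
  refine ⟨MulAction.toPerm γ, hγ, ?_⟩
  intro G hG
  obtain ⟨a, b, hab⟩ := aff_of_fix_infty (γ * G * γ⁻¹) (by
    rw [mul_smul, mul_smul, inv_smul_eq_iff.2 hγ.symm, hG, hγ])
  refine ⟨a, b, ?_⟩
  intro z
  have := hab z
  rw [mul_smul, mul_smul] at this
  exact this

theorem fix_GL {E : Type*} [Field E] [DecidableEq E] (G : GL (Fin 2) E)
    (l : E) (hl : l ^ 2 - (G 0 0 + G 1 1) * l + (G 0 0 * G 1 1 - G 0 1 * G 1 0) = 0) :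
    ∃ ω : OnePoint E, G • ω = ω := by
  by_cases hc : G 1 0 = 0
  · exact ⟨OnePoint.infty, OnePoint.smul_infty_eq_self_iff.2 hc⟩
  · refine ⟨(((l - G 1 1) / G 1 0 : E) : OnePoint E), ?_⟩
    rw [← Matrix.GeneralLinearGroup.fixpointPolynomial_aeval_eq_zero_iff]
    simp [Matrix.GeneralLinearGroup.fixpointPolynomial]
    field_simp
    linear_combination hl

theorem ker_GL {E : Type*} [Field E] [DecidableEq E] (G : GL (Fin 2) E)
    (h : ∀ ω : OnePoint E, G • ω = ω) : G 1 0 = 0 ∧ G 0 1 = 0 ∧ G 0 0 = G 1 1 := by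
  have h10 : G 1 0 = 0 := OnePoint.smul_infty_eq_self_iff.1 (h _)
  have h0 := h ((0 : E) : OnePoint E)
  have h1 := h ((1 : E) : OnePoint E)
  rw [← Matrix.GeneralLinearGroup.fixpointPolynomial_aeval_eq_zero_iff] at h0 h1
  simp [Matrix.GeneralLinearGroup.fixpointPolynomial, h10] at h0 h1
  refine ⟨h10, h0, ?_⟩
  rw [h0] at h1
  linear_combination -h1

open Classical in
/-- The action of `SL₂(F)` on the projective line over an extension. -/
noncomputable def slHom (F E : Type*) [Field F] [Field E] [Algebra F E] :
    SpecialLinearGroup (Fin 2) F →* Equiv.Perm (OnePoint E) :=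
  (MulAction.toPermHom (GL (Fin 2) E) (OnePoint E)).comp
    (SpecialLinearGroup.toGL.comp (SpecialLinearGroup.map (algebraMap F E)))

open Classical in
theorem slHom_apply (F E : Type*) [Field F] [Field E] [Algebra F E]
    (A : SpecialLinearGroup (Fin 2) F) (ω : OnePoint E) : slHom F E A ω =
      (SpecialLinearGroup.toGL (SpecialLinearGroup.map (algebraMap F E) A) : GL (Fin 2) E) • ω := rfl

theorem entry_toGL (F E : Type*) [Field F] [Field E] [Algebra F E]
    (A : SpecialLinearGroup (Fin 2) F) (i j : Fin 2) :
    (SpecialLinearGroup.toGL (SpecialLinearGroup.map (algebraMap F E) A) : GL (Fin 2) E) i j =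
      algebraMap F E (A i j) := rfl

theorem slHom_ker (F E : Type*) [Field F] [Field E] [Algebra F E]
    (A : SpecialLinearGroup (Fin 2) F) :
    slHom F E A = 1 ↔ A ∈ Subgroup.center (SpecialLinearGroup (Fin 2) F) := by
  classical
  rw [Matrix.SpecialLinearGroup.mem_center_iff]
  constructor
  · intro h
    obtain ⟨h1, h2, h3⟩ := ker_GL
      (SpecialLinearGroup.toGL (SpecialLinearGroup.map (algebraMap F E) A) : GL (Fin 2) E) (by
        intro ω
        rw [← slHom_apply, h]
        rfl)
    rw [entry_toGL] at h1 h2 h3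
    rw [entry_toGL] at h3
    rw [map_eq_zero] at h1 h2
    have h4 := (algebraMap F E).injective h3
    have hdet := A.det_coe
    rw [Matrix.det_fin_two, h1, h2, ← h4] at hdet
    refine ⟨A 0 0, ?_, ?_⟩
    · rw [Fintype.card_fin, pow_two]
      linear_combination hdet
    · ext i j
      fin_cases i <;> fin_cases j <;> simp [h1, h2, h4]
  · rintro ⟨r, hr, hA⟩
    have e : ∀ i j, A i j = (scalar (Fin 2) r) i j := fun i j => by rw [hA]
    have hr0 : r ≠ 0 := by
      rintro rfl
      simp at hr
    have hr1 : algebraMap F E r ≠ 0 := by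
      rwa [Ne, map_eq_zero]
    ext ω : 1
    rw [slHom_apply, Equiv.Perm.one_apply]
    induction ω with
    | infty => rw [OnePoint.smul_infty_eq_self_iff, entry_toGL, e]; simp
    | coe z =>
      rw [← Matrix.GeneralLinearGroup.fixpointPolynomial_aeval_eq_zero_iff]
      simp only [Matrix.GeneralLinearGroup.fixpointPolynomial, entry_toGL, e]
      simp

/-- The action of `PSL₂(F)` on the projective line over an extension. -/
noncomputable def pslHom (F E : Type*) [Field F] [Field E] [Algebra F E] :
    ProjectiveSpecialLinearGroup (Fin 2) F →* Equiv.Perm (OnePoint E) :=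
  QuotientGroup.lift _ (slHom F E) (fun A hA => (slHom_ker F E A).2 hA)

theorem pslHom_injective (F E : Type*) [Field F] [Field E] [Algebra F E] :
    Function.Injective (pslHom F E) := by
  rw [injective_iff_map_eq_one]
  intro g
  induction g using QuotientGroup.induction_on with
  | H A =>
    intro h
    rw [QuotientGroup.eq_one_iff]
    exact (slHom_ker F E A).1 h

theorem exists_ext (F : Type) [Field F] [Finite F] : ∃ (E : Type) (_ : Field E) (_ : Algebra F E),
    Finite E ∧ ∀ a : F, ∃ l : E, l ^ 2 - algebraMap F E a * l + 1 = 0 := by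
  classical
  have : Fintype F := Fintype.ofFinite F
  let P : Polynomial F := ∏ a : F, (Polynomial.X ^ 2 - Polynomial.C a * Polynomial.X + 1)
  refine ⟨P.SplittingField, inferInstance, inferInstance, ?_, ?_⟩
  · exact Module.finite_of_finite F
  · intro a
    have hdeg : (Polynomial.X ^ 2 - Polynomial.C a * Polynomial.X + 1 : Polynomial F).degree = 2 := by
      compute_degree!
    have hne : ∀ a : F, (Polynomial.X ^ 2 - Polynomial.C a * Polynomial.X + 1 : Polynomial F) ≠ 0 := by
      intro a h0
      have h1 := congrArg (fun P => Polynomial.coeff P 0) h0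
      simp at h1
    have hs := Polynomial.SplittingField.splits P
    have hP : P.map (algebraMap F P.SplittingField) ≠ 0 := by
      rw [Ne, Polynomial.map_eq_zero]
      exact Finset.prod_ne_zero_iff.2 (fun a _ => hne a)
    have hdvd : (Polynomial.X ^ 2 - Polynomial.C a * Polynomial.X + 1 : Polynomial F) ∣ P :=
      Finset.dvd_prod_of_mem _ (Finset.mem_univ a)
    have hs2 := hs.of_dvd hP (Polynomial.map_dvd (algebraMap F P.SplittingField) hdvd)
    obtain ⟨l, hl⟩ := hs2.exists_eval_eq_zero (by
      rw [Polynomial.degree_map, hdeg]; decide)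
    refine ⟨l, ?_⟩
    simpa using hl

theorem psl_mob (p : ℕ) (F : Type) [Field F] [Finite F] [CharP F p] (S : Type*) [Group S]
    (φ : S ≃* ProjectiveSpecialLinearGroup (Fin 2) F) :
    ∃ (E : Type) (_ : Field E) (_ : Finite E) (_ : CharP E p) (Ω : Type) (_ : Fintype Ω)
      (_ : MulAction S Ω), FaithfulSMul S Ω ∧ MobAct E S Ω := by
  classical
  obtain ⟨E, hE, hA, hfin, hsplit⟩ := exists_ext F
  have hchar : CharP E p := charP_of_injective_algebraMap (algebraMap F E).injective p
  let ψ : S →* Equiv.Perm (OnePoint E) := (pslHom F E).comp φ.toMonoidHom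
  have hψ : Function.Injective ψ := (pslHom_injective F E).comp φ.injective
  have : Finite (OnePoint E) := inferInstanceAs (Finite (Option E))
  let act : MulAction S (OnePoint E) := MulAction.compHom (OnePoint E) ψ
  have hsm : ∀ (g : S) (ω : OnePoint E), g • ω = ψ g ω := fun g ω => rfl
  have hrep : ∀ g : S, ∃ A : SpecialLinearGroup (Fin 2) F, ∀ ω : OnePoint E, g • ω =
      (SpecialLinearGroup.toGL (SpecialLinearGroup.map (algebraMap F E) A) : GL (Fin 2) E) • ω := by
    intro g
    obtain ⟨A, hA⟩ := QuotientGroup.mk_surjective (φ g)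
    refine ⟨A, fun ω => ?_⟩
    rw [hsm]
    change pslHom F E (φ g) ω = _
    rw [← hA]
    rfl
  refine ⟨E, hE, hfin, hchar, OnePoint E, Fintype.ofFinite _, act, ⟨?_⟩, ⟨?_, ?_⟩⟩
  · intro a b hab
    apply hψ
    ext ω : 1
    exact hab ω
  · intro ω
    obtain ⟨e, he, h1⟩ := chart_GL ω
    refine ⟨e, he, ?_⟩
    intro g hg
    obtain ⟨A, hA⟩ := hrep g
    rw [hA] at hg
    obtain ⟨a, b, hab⟩ := h1 _ hg
    refine ⟨a, b, fun z => ?_⟩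
    rw [hA]
    exact hab z
  · intro g
    obtain ⟨A, hA⟩ := hrep g
    obtain ⟨l, hl⟩ := hsplit (A 0 0 + A 1 1)
    obtain ⟨ω, hω⟩ := fix_GL
      (SpecialLinearGroup.toGL (SpecialLinearGroup.map (algebraMap F E) A) : GL (Fin 2) E) l (by
        simp only [entry_toGL]
        have hdet := A.det_coe
        rw [Matrix.det_fin_two] at hdet
        have hdet2 := congrArg (algebraMap F E) hdet
        simp only [map_sub, map_mul, map_one] at hdet2
        rw [map_add] at hl
        linear_combination hl + hdet2)
    exact ⟨ω, by rw [hA]; exact hω⟩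

end

section
open Matrix in
theorem card_SL (F : Type*) [Field F] [Finite F] : Nat.card (SpecialLinearGroup (Fin 2) F) =
    Nat.card F * (Nat.card F ^ 2 - 1) := by
  classical
  have : Fintype F := Fintype.ofFinite F
  have hGL := Matrix.card_GL_field (𝔽 := F) 2
  have h1 := Subgroup.card_mul_index (GeneralLinearGroup.det (n := Fin 2) (R := F)).ker
  rw [Subgroup.index_ker] at h1
  have hs : Function.Surjective (GeneralLinearGroup.det (n := Fin 2) (R := F)) := by
    intro u
    refine ⟨GeneralLinearGroup.mkOfDetNeZero !![(u : F), 0; 0, 1] (by simp [Matrix.det_fin_two]), ?_⟩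
    ext
    simp [GeneralLinearGroup.mkOfDetNeZero]
  rw [MonoidHom.range_eq_top.2 hs, Subgroup.card_top, Nat.card_units, hGL] at h1
  have h2 : Nat.card (GeneralLinearGroup.det (n := Fin 2) (R := F)).ker =
      Nat.card (SpecialLinearGroup (Fin 2) F) := by
    have hm : ∀ A : SpecialLinearGroup (Fin 2) F, (SpecialLinearGroup.toGL A : GL (Fin 2) F) ∈
        (GeneralLinearGroup.det (n := Fin 2) (R := F)).ker := by
      intro A
      have : (SpecialLinearGroup.toGL A : GL (Fin 2) F) ∈ GeneralLinearGroup.det ⁻¹' {1} := by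
        rw [← SpecialLinearGroup.range_toGL]; exact ⟨A, rfl⟩
      exact this
    refine (Nat.card_congr (Equiv.ofBijective (fun A => ⟨SpecialLinearGroup.toGL A, hm A⟩)
      ⟨?_, ?_⟩)).symm
    · intro A B h
      exact SpecialLinearGroup.toGL_injective (congrArg Subtype.val h)
    · rintro ⟨g, hg⟩
      have : g ∈ Set.range (SpecialLinearGroup.toGL : SpecialLinearGroup (Fin 2) F → GL (Fin 2) F) := by
        rw [SpecialLinearGroup.range_toGL]; exact hg
      obtain ⟨A, rfl⟩ := this
      exact ⟨A, rfl⟩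
  rw [h2] at h1
  have hq : 1 < Nat.card F := Finite.one_lt_card
  rw [Fin.prod_univ_two] at h1
  simp only [Fin.val_zero, Fin.val_one, pow_zero, pow_one] at h1
  rw [← Nat.card_eq_fintype_card] at h1
  generalize Nat.card F = q at *
  have hq1 : 0 < q - 1 := by omega
  apply Nat.eq_of_mul_eq_mul_right hq1
  rw [h1]
  have : q ^ 2 - q = q * (q - 1) := by rw [pow_two, Nat.mul_sub, mul_one]
  rw [this]; ring

open Matrix in
theorem card_PSL (F : Type*) [Field F] [Finite F] : ∃ z, (z = 1 ∨ z = 2) ∧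
    (Odd (Nat.card F) → z = 2) ∧
    Nat.card (ProjectiveSpecialLinearGroup (Fin 2) F) * z = Nat.card F * (Nat.card F ^ 2 - 1) := by
  classical
  have h1 := Subgroup.index_mul_card (Subgroup.center (SpecialLinearGroup (Fin 2) F))
  rw [card_SL] at h1
  have hz : Nat.card (Subgroup.center (SpecialLinearGroup (Fin 2) F)) = Nat.card (rootsOfUnity 2 F) :=
    Nat.card_congr (Matrix.SpecialLinearGroup.center_equiv_rootsOfUnity' (0 : Fin 2)).toEquiv
  refine ⟨_, ?_, ?_, h1⟩
  · rw [hz]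
    have a := card_rootsOfUnity F 2
    have b : 0 < Nat.card (rootsOfUnity 2 F) := Nat.card_pos
    omega
  · intro ho
    rw [hz]
    apply le_antisymm (card_rootsOfUnity F 2)
    have hne : (-1 : Fˣ) ≠ 1 := by
      intro h
      have h2 : (2 : F) = 0 := by
        have := congrArg Units.val h
        simp only [Units.val_neg, Units.val_one] at this
        linear_combination -this
      have : Fintype F := Fintype.ofFinite F
      rw [Nat.card_eq_fintype_card] at ho
      have hc : ringChar F = 2 := by
        have := ringChar.dvd (R := F) (x := 2) (by exact_mod_cast h2)
        have h5 := CharP.ringChar_ne_one (R := F)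
        exact ((Nat.dvd_prime Nat.prime_two).1 this).resolve_left h5
      have := FiniteField.even_card_iff_char_two.1 hc
      rw [Nat.odd_iff] at ho
      omega
    have : Nontrivial (rootsOfUnity 2 F) := ⟨⟨⟨-1, by simp [mem_rootsOfUnity]⟩, 1, fun h => hne (congrArg Subtype.val h)⟩⟩
    exact Finite.one_lt_card

end

section
open scoped Pointwise

theorem mem_conj_smul {G : Type*} [Group G] (κ : MulAut G) (X : Subgroup G) (x : G) (hx : x ∈ X) :
    κ x ∈ κ • X := Subgroup.smul_mem_pointwise_smul x κ X hx

theorem aut_conj {G : Type*} [Group G] (κ : MulAut G) (g : G) :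
    κ * MulAut.conj g = MulAut.conj (κ g) * κ := by
  ext x
  simp [MulAut.conj_apply]

theorem normal_of_conj_smul {G : Type*} [Group G] (X : Subgroup G)
    (h : ∀ g : G, MulAut.conj g • X = X) : X.Normal := by
  constructor
  intro n hn g
  have := mem_conj_smul (MulAut.conj g) X n hn
  rwa [h g, MulAut.conj_apply] at this

theorem center_trivial {G : Type*} [Group G] [IsSimpleGroup G]
    (hnonab : ¬ ∀ a b : G, a * b = b * a) (z : G) (hz : ∀ g, z * g = g * z) : z = 1 := by
  have hzc : z ∈ Subgroup.center G := Subgroup.mem_center_iff.2 (fun g => (hz g).symm)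
  rcases (inferInstance : (Subgroup.center G).Normal).eq_bot_or_eq_top with h | h
  · rw [h] at hzc
    exact Subgroup.mem_bot.1 hzc
  · exfalso
    apply hnonab
    intro a b
    have : b ∈ Subgroup.center G := by rw [h]; trivial
    exact Subgroup.mem_center_iff.1 this a

theorem aut_moves {G : Type*} [Group G] [IsSimpleGroup G] (X : Subgroup G) (h0 : X ≠ ⊥) (h1 : X ≠ ⊤) (κ : MulAut G)
    (hκ : ∀ g : G, κ • MulAut.conj g • X = MulAut.conj g • X) : κ = 1 := by
  let N0 : Subgroup (MulAut G) :=
    { carrier := {κ | ∀ g : G, κ • MulAut.conj g • X = MulAut.conj g • X}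
      mul_mem' := by
        intro a b ha hb g
        rw [mul_smul, hb, ha]
      one_mem' := fun g => one_smul _ _
      inv_mem' := by
        intro a ha g
        rw [inv_smul_eq_iff, ha] }
  have hN0 : ∀ κ, κ ∈ N0 ↔ ∀ g : G, κ • MulAut.conj g • X = MulAut.conj g • X := fun κ => Iff.rfl
  have hconj : ∀ s : G, ∀ κ ∈ N0, MulAut.conj s * κ * (MulAut.conj s)⁻¹ ∈ N0 := by
    intro s κ hκ g
    rw [mul_smul, mul_smul, ← map_inv, ← mul_smul (MulAut.conj s⁻¹), ← map_mul, hκ, ← mul_smul,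
      ← map_mul, mul_inv_cancel_left]
  have hnorm : (N0.comap MulAut.conj).Normal := by
    constructor
    intro n hn g
    rw [Subgroup.mem_comap, map_mul, map_mul, map_inv]
    exact hconj g _ hn
  have hbot : N0.comap MulAut.conj = ⊥ := by
    rcases hnorm.eq_bot_or_eq_top with h | h
    · exact h
    · exfalso
      have hX : X.Normal := by
        apply normal_of_conj_smul
        intro g
        have : g ∈ N0.comap MulAut.conj := by rw [h]; trivial
        have h2 := this 1
        rwa [map_one, one_smul] at h2
      rcases hX.eq_bot_or_eq_top with h | h
      · exact h0 h
      · exact h1 h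
  ext s
  have hm : κ s * s⁻¹ ∈ N0.comap MulAut.conj := by
    rw [Subgroup.mem_comap, map_mul, map_inv]
    have : MulAut.conj (κ s) * (MulAut.conj s)⁻¹ = κ * (MulAut.conj s * κ⁻¹ * (MulAut.conj s)⁻¹) := by
      rw [← mul_assoc, ← mul_assoc, aut_conj]
      group
    rw [this]
    exact N0.mul_mem hκ (hconj s _ (N0.inv_mem hκ))
  rw [hbot, Subgroup.mem_bot, mul_inv_eq_one] at hm
  exact hm

/-- `κ` has a prime-power element which lies in no proper `κ`-invariant subgroup. -/
def GoodAut {G : Type*} [Group G] (κ : MulAut G) : Prop :=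
  ∃ x : G, IsPrimePow (orderOf x) ∧ ∀ M : Subgroup G, x ∈ M → κ • M = M → M = ⊤

theorem zpowers_ne_top {G : Type*} [Group G] (hnonab : ¬ ∀ a b : G, a * b = b * a) (x : G) :
    Subgroup.zpowers x ≠ ⊤ := by
  intro h
  apply hnonab
  intro a b
  have ha : a ∈ Subgroup.zpowers x := by rw [h]; trivial
  have hb : b ∈ Subgroup.zpowers x := by rw [h]; trivial
  obtain ⟨i, rfl⟩ := ha
  obtain ⟨j, rfl⟩ := hb
  exact (Commute.refl x).zpow_zpow i j

theorem smul_zpowers {G : Type*} [Group G] (κ : MulAut G) (x : G) :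
    κ • Subgroup.zpowers x = Subgroup.zpowers (κ x) := by
  exact MonoidHom.map_zpowers κ.toMonoidHom x

theorem orderOf_aut {G : Type*} [Group G] (κ : MulAut G) (x : G) : orderOf (κ x) = orderOf x :=
  orderOf_injective κ.toMonoidHom κ.injective x

theorem goodAut_of_gen {G : Type*} [Group G] [IsSimpleGroup G]
    (hnonab : ¬ ∀ a b : G, a * b = b * a) (κ : MulAut G) (hκ : κ ≠ 1) (n : ℕ) (hn : IsPrimePow n)
    (x : G) (hx : orderOf x = n) (hgen : ∀ x y : G, orderOf x = n → orderOf y = n →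
      Subgroup.zpowers x ≠ Subgroup.zpowers y → ∀ M : Subgroup G, x ∈ M → y ∈ M → M = ⊤) :
    GoodAut κ := by
  by_contra hbad
  apply hκ
  refine aut_moves (Subgroup.zpowers x) ?_ (zpowers_ne_top hnonab x) κ ?_
  · rw [Ne, Subgroup.zpowers_eq_bot]
    rintro rfl
    rw [orderOf_one] at hx
    exact hn.ne_one hx.symm
  · intro g
    by_contra hne
    rw [smul_zpowers, smul_zpowers] at hne
    apply hbad
    have ho : orderOf (MulAut.conj g x) = n := by rw [orderOf_aut, hx]
    refine ⟨MulAut.conj g x, by rw [ho]; exact hn, ?_⟩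
    intro M hM hκM
    refine hgen _ _ (by rw [orderOf_aut, ho]) ho hne M ?_ hM
    have := mem_conj_smul κ M _ hM
    rwa [hκM] at this

theorem final_of_good {H : Type*} [Group H] (S : Subgroup H) [S.Normal]
    (hcent : Subgroup.centralizer (S : Set H) = ⊥) (hne : S ≠ ⊤)
    (hgood : ∀ κ : MulAut S, κ ≠ 1 → GoodAut κ) (K : Subgroup H)
    (hK : (K : Set H) * (S : Set H) = Set.univ) :
    ∃ x ∈ S, IsPrimePow (orderOf x) ∧ K ⊔ Subgroup.closure {x} = ⊤ := by
  have hKS : K ⊔ S = ⊤ := by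
    rw [eq_top_iff]
    intro h _
    have : h ∈ (K : Set H) * (S : Set H) := by rw [hK]; trivial
    obtain ⟨k, hk, s, hs, rfl⟩ := this
    exact Subgroup.mul_mem_sup hk hs
  have hKne : K ≠ ⊥ := by
    rintro rfl
    rw [bot_sup_eq] at hKS
    exact hne hKS
  obtain ⟨⟨k, hk⟩, hk0⟩ := Subgroup.ne_bot_iff_exists_ne_one.1 hKne
  have hk1 : k ≠ 1 := fun h => hk0 (Subtype.ext h)
  have hκ : (MulAut.conjNormal k : MulAut S) ≠ 1 := by
    intro h
    apply hk1
    rw [← Subgroup.mem_bot, ← hcent, Subgroup.mem_centralizer_iff]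
    intro s hs
    have := congrArg (fun κ : MulAut S => ((κ ⟨s, hs⟩ : S) : H)) h
    simp only [MulAut.conjNormal_apply, MulAut.one_apply] at this
    rw [mul_inv_eq_iff_eq_mul] at this
    exact this.symm
  obtain ⟨x, hx, hM⟩ := hgood _ hκ
  refine ⟨x, x.2, by rwa [Subgroup.orderOf_coe], ?_⟩
  have hkM : k ∈ K ⊔ Subgroup.closure {(x : H)} := (le_sup_left : K ≤ _) hk
  have hS : ((K ⊔ Subgroup.closure {(x : H)}).subgroupOf S) = ⊤ := by
    apply hM
    · rw [Subgroup.mem_subgroupOf]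
      exact (le_sup_right : Subgroup.closure {(x : H)} ≤ _) (Subgroup.subset_closure rfl)
    · ext s
      rw [Subgroup.mem_pointwise_smul_iff_inv_smul_mem, Subgroup.mem_subgroupOf,
        Subgroup.mem_subgroupOf, ← map_inv, MulAut.smul_def, MulAut.conjNormal_apply]
      rw [Subgroup.mul_mem_cancel_right _ (inv_mem (inv_mem hkM)),
        Subgroup.mul_mem_cancel_left _ (inv_mem hkM)]
  rw [Subgroup.subgroupOf_eq_top] at hS
  rw [eq_top_iff, ← hKS]
  exact sup_le le_sup_left hS

end

section
open scoped Pointwise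

theorem orb_stab {G : Type*} [Group G] [Finite G] (M X : Subgroup G) :
    ∃ N : Subgroup G, (∀ g, g ∈ N ↔ g ∈ M ∧ MulAut.conj g • X = X) ∧
      {Y : Subgroup G | ∃ m ∈ M, Y = MulAut.conj m • X}.ncard * Nat.card N = Nat.card M := by
  let act : MulAction M (Subgroup G) := MulAction.compHom (Subgroup G) (MulAut.conj.comp M.subtype)
  have hsm : ∀ (m : M) (Y : Subgroup G), m • Y = MulAut.conj (m : G) • Y := fun m Y => rfl
  refine ⟨(MulAction.stabilizer M X).map M.subtype, ?_, ?_⟩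
  · intro g
    rw [Subgroup.mem_map]
    constructor
    · rintro ⟨m, hm, rfl⟩
      exact ⟨m.2, hm⟩
    · rintro ⟨h1, h2⟩
      exact ⟨⟨g, h1⟩, h2, rfl⟩
  · rw [Subgroup.card_map_of_injective M.subtype_injective]
    have h1 : {Y : Subgroup G | ∃ m ∈ M, Y = MulAut.conj m • X} = MulAction.orbit M X := by
      ext Y
      constructor
      · rintro ⟨m, hm, rfl⟩
        exact ⟨⟨m, hm⟩, rfl⟩
      · rintro ⟨m, rfl⟩
        exact ⟨m, m.2, rfl⟩
    rw [h1, ← MulAction.index_stabilizer, Subgroup.index_mul_card]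

/-- Subgroups of order five inside `M`. -/
def pts {G : Type*} [Group G] (M : Subgroup G) : Set (Subgroup G) := {P | Nat.card P = 5 ∧ P ≤ M}

theorem pts_sylow {G : Type*} [Group G] [Finite G] (M : Subgroup G) (h5 : 5 ∣ Nat.card M)
    (h25 : ¬ 25 ∣ Nat.card M) :
    (pts M).ncard = Nat.card (Sylow 5 M) ∧
    ∀ P ∈ pts M, ∃ Q : Sylow 5 M, (Q : Subgroup M).map M.subtype = P := by
  have : Fact (Nat.Prime 5) := ⟨by norm_num⟩
  have hf : (Nat.card M).factorization 5 = 1 := by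
    have h0 : Nat.card M ≠ 0 := Nat.card_pos.ne'
    have a := ((Nat.prime_five).dvd_iff_one_le_factorization h0).1 h5
    have b : ¬ 2 ≤ (Nat.card M).factorization 5 := by
      intro h
      exact h25 ((Nat.prime_five.pow_dvd_iff_le_factorization h0 (k := 2)).2 h)
    omega
  have hsur : ∀ P ∈ pts M, ∃ Q : Sylow 5 M, (Q : Subgroup M).map M.subtype = P := by
    rintro P ⟨hc, hP⟩
    refine ⟨Sylow.ofCard (P.subgroupOf M) ?_, ?_⟩
    · rw [hf, pow_one, Nat.card_congr (Subgroup.subgroupOfEquivOfLe hP).toEquiv, hc]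
    · rw [Sylow.coe_ofCard, Subgroup.subgroupOf_map_subtype, inf_eq_left.2 hP]
  refine ⟨?_, hsur⟩
  have hmem : ∀ Q : Sylow 5 M, (Q : Subgroup M).map M.subtype ∈ pts M := by
    intro Q
    refine ⟨?_, Subgroup.map_subtype_le _⟩
    rw [Subgroup.card_map_of_injective M.subtype_injective, Sylow.card_eq_multiplicity, hf, pow_one]
  rw [← Nat.card_coe_set_eq]
  symm
  refine Nat.card_congr (Equiv.ofBijective (fun Q => ⟨_, hmem Q⟩) ⟨?_, ?_⟩)
  · intro Q Q' h
    exact Sylow.ext (Subgroup.map_injective M.subtype_injective (congrArg Subtype.val h))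
  · rintro ⟨P, hP⟩
    obtain ⟨Q, hQ⟩ := hsur P hP
    exact ⟨Q, Subtype.ext hQ⟩

theorem card_aut_smul {G : Type*} [Group G] (κ : MulAut G) (M : Subgroup G) :
    Nat.card (κ • M : Subgroup G) = Nat.card M :=
  (Nat.card_congr (Subgroup.equivSMul κ M).toEquiv).symm

theorem smul_pts {G : Type*} [Group G] (κ : MulAut G) (M P : Subgroup G) (hP : P ∈ pts M) :
    κ • P ∈ pts (κ • M) :=
  ⟨by rw [card_aut_smul, hP.1], Subgroup.pointwise_smul_le_pointwise_smul_iff.2 hP.2⟩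

theorem pts_trans {G : Type*} [Group G] [Finite G] (M : Subgroup G) (h5 : 5 ∣ Nat.card M)
    (h25 : ¬ 25 ∣ Nat.card M) (P P' : Subgroup G) (hP : P ∈ pts M) (hP' : P' ∈ pts M) :
    ∃ m ∈ M, P' = MulAut.conj m • P := by
  have : Fact (Nat.Prime 5) := ⟨by norm_num⟩
  obtain ⟨Q, rfl⟩ := (pts_sylow M h5 h25).2 P hP
  obtain ⟨Q', rfl⟩ := (pts_sylow M h5 h25).2 P' hP'
  obtain ⟨g, rfl⟩ := MulAction.exists_smul_eq M Q Q'
  refine ⟨g, g.2, ?_⟩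
  ext x
  rw [Sylow.smul_def, Sylow.pointwise_smul_def, Subgroup.mem_map, 
    Subgroup.mem_pointwise_smul_iff_inv_smul_mem, Subgroup.mem_map]
  constructor
  · rintro ⟨y, hy, rfl⟩
    rw [Subgroup.mem_pointwise_smul_iff_inv_smul_mem] at hy
    exact ⟨_, hy, by simp [← map_inv, MulAut.smul_def]⟩
  · rintro ⟨y, hy, h⟩
    refine ⟨MulAut.conj g • y, Subgroup.smul_mem_pointwise_smul _ _ _ hy, ?_⟩
    rw [eq_inv_smul_iff] at h
    rw [← h]
    simp [MulAut.smul_def]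

theorem pts_norm {G : Type*} [Group G] [Finite G] (M : Subgroup G) (h5 : 5 ∣ Nat.card M)
    (h25 : ¬ 25 ∣ Nat.card M) (P : Subgroup G) (hP : P ∈ pts M) :
    ∃ N : Subgroup G, (∀ g, g ∈ N ↔ g ∈ M ∧ MulAut.conj g • P = P) ∧
      (pts M).ncard * Nat.card N = Nat.card M := by
  obtain ⟨N, h1, h2⟩ := orb_stab M P
  refine ⟨N, h1, ?_⟩
  rw [← h2]
  congr 2
  ext Y
  constructor
  · intro hY
    exact pts_trans M h5 h25 P Y hP hY
  · rintro ⟨m, hm, rfl⟩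
    have := smul_pts (MulAut.conj m) M P hP
    rwa [Subgroup.conj_smul_eq_self_of_mem hm] at this

end

section
open scoped Pointwise

/-- The facts about the simple group of order 360 that are needed. -/
structure SixData (G : Type*) [Group G] : Prop where
  card : Nat.card G = 360
  gen : ∀ M P P' : Subgroup G, P ∈ pts M → P' ∈ pts M → P ≠ P' →
    M = ⊤ ∨ (Nat.card M = 60 ∧ 20 ≤ {y : G | y ∈ M ∧ orderOf y = 3}.ncard)
  three : {y : G | orderOf y = 3}.ncard ≤ 80

/-- Subgroups of order 60 with two subgroups of order five. -/
def IsLine {G : Type*} [Group G] (M : Subgroup G) : Prop :=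
  Nat.card M = 60 ∧ ∃ P P', P ∈ pts M ∧ P' ∈ pts M ∧ P ≠ P'

theorem IsLine.smul {G : Type*} [Group G] {M : Subgroup G} (h : IsLine M) (κ : MulAut G) :
    IsLine (κ • M) := by
  obtain ⟨h1, P, P', hP, hP', hne⟩ := h
  refine ⟨by rw [card_aut_smul, h1], κ • P, κ • P', smul_pts κ M P hP, smul_pts κ M P' hP', ?_⟩
  intro h
  exact hne (smul_left_cancel κ h)

theorem IsLine.ne_top {G : Type*} [Group G] (hG : SixData G) {M : Subgroup G} (h : IsLine M) :
    M ≠ ⊤ := by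
  rintro rfl
  have := h.1
  rw [Subgroup.card_top, hG.card] at this
  omega

theorem pts_mod {G : Type*} [Group G] [Finite G] (M : Subgroup G) (h5 : 5 ∣ Nat.card M)
    (h25 : ¬ 25 ∣ Nat.card M) : (pts M).ncard % 5 = 1 := by
  have : Fact (Nat.Prime 5) := ⟨by norm_num⟩
  rw [(pts_sylow M h5 h25).1]
  exact card_sylow_modEq_one 5 M

theorem IsLine.ncard_pts {G : Type*} [Group G] [Finite G] {M : Subgroup G} (h : IsLine M) :
    (pts M).ncard = 6 := by
  obtain ⟨h1, P, P', hP, hP', hne⟩ := h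
  have h5 : 5 ∣ Nat.card M := by rw [h1]; norm_num
  have h25 : ¬ 25 ∣ Nat.card M := by rw [h1]; norm_num
  have hm := pts_mod M h5 h25
  obtain ⟨N, -, hN⟩ := pts_norm M h5 h25 P hP
  have h2 : 1 < (pts M).ncard := by
    rw [Set.one_lt_ncard (Set.toFinite _)]
    exact ⟨P, hP, P', hP', hne⟩
  have hd : (pts M).ncard ∈ Nat.divisors 60 := by
    rw [Nat.mem_divisors]
    exact ⟨⟨_, by rw [hN, h1]⟩, by norm_num⟩
  generalize (pts M).ncard = a at *
  have : Nat.divisors 60 = {1,2,3,4,5,6,10,12,15,20,30,60} := by decide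
  rw [this] at hd
  simp only [Finset.mem_insert, Finset.mem_singleton] at hd
  omega

theorem line_eq {G : Type*} [Group G] [Finite G] (hG : SixData G) {A B : Subgroup G} (hA : IsLine A)
    (hB : IsLine B) (P P' : Subgroup G) (h1 : P ∈ pts A) (h2 : P ∈ pts B) (h3 : P' ∈ pts A)
    (h4 : P' ∈ pts B) (hne : P ≠ P') : A = B := by
  have key := hG.gen (A ⊓ B) P P' ⟨h1.1, le_inf h1.2 h2.2⟩ ⟨h3.1, le_inf h3.2 h4.2⟩ hne
  have hc : Nat.card (A ⊓ B : Subgroup G) = 60 := by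
    rcases key with h | h
    · exfalso
      apply hA.ne_top hG
      rw [eq_top_iff, ← h]
      exact inf_le_left
    · exact h.1
  have e1 : A ⊓ B = A := Subgroup.eq_of_le_of_card_ge inf_le_left (by rw [hc, hA.1])
  have e2 : A ⊓ B = B := Subgroup.eq_of_le_of_card_ge inf_le_right (by rw [hc, hB.1])
  rw [← e1, e2]

theorem ne_bot_of_line {G : Type*} [Group G] {A : Subgroup G} (hA : IsLine A) : A ≠ ⊥ := by
  rintro rfl
  have := hA.1
  rw [Subgroup.card_bot] at this
  omega

theorem ncard_all_pts {G : Type*} [Group G] [Finite G] [IsSimpleGroup G] (hG : SixData G)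
    {A : Subgroup G} (hA : IsLine A) : (pts (⊤ : Subgroup G)).ncard = 36 := by
  have hc : Nat.card (⊤ : Subgroup G) = 360 := by rw [Subgroup.card_top, hG.card]
  have h5 : 5 ∣ Nat.card (⊤ : Subgroup G) := by rw [hc]; norm_num
  have h25 : ¬ 25 ∣ Nat.card (⊤ : Subgroup G) := by rw [hc]; norm_num
  have hm := pts_mod ⊤ h5 h25
  obtain ⟨_, P, P', hP, hP', hne⟩ := id hA
  obtain ⟨N, -, hN⟩ := pts_norm ⊤ h5 h25 P ⟨hP.1, le_top⟩
  have hsub : pts A ⊆ pts ⊤ := fun P hP => ⟨hP.1, le_top⟩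
  have h6 := Set.ncard_le_ncard hsub (Set.toFinite _)
  rw [hA.ncard_pts] at h6
  have hn6 : (pts (⊤ : Subgroup G)).ncard ≠ 6 := by
    intro h
    have heq : pts A = pts ⊤ := Set.eq_of_subset_of_ncard_le hsub (by rw [h, hA.ncard_pts])
      (Set.toFinite _)
    have hN : A.Normal := by
      apply normal_of_conj_smul
      intro g
      have hB := hA.smul (MulAut.conj g)
      have hsub2 : pts (MulAut.conj g • A) ⊆ pts ⊤ := fun P hP => ⟨hP.1, le_top⟩
      have heq2 : pts (MulAut.conj g • A) = pts ⊤ :=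
        Set.eq_of_subset_of_ncard_le hsub2 (by rw [h, hB.ncard_pts]) (Set.toFinite _)
      refine line_eq hG hB hA P P' ?_ hP ?_ hP' hne
      · rw [heq2, ← heq]; exact hP
      · rw [heq2, ← heq]; exact hP'
    rcases hN.eq_bot_or_eq_top with h | h
    · exact ne_bot_of_line hA h
    · exact hA.ne_top hG h
  have hd : (pts (⊤ : Subgroup G)).ncard ∈ Nat.divisors 360 := by
    rw [Nat.mem_divisors]
    exact ⟨⟨_, by rw [hN, hc]⟩, by norm_num⟩
  generalize (pts (⊤ : Subgroup G)).ncard = a at *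
  have : Nat.divisors 360 = {1,2,3,4,5,6,8,9,10,12,15,18,20,24,30,36,40,45,60,72,90,120,180,360} := by
    decide +kernel
  rw [this] at hd
  simp only [Finset.mem_insert, Finset.mem_singleton] at hd
  omega

/-- Normalizers of points. -/
theorem norm_point {G : Type*} [Group G] [Finite G] [IsSimpleGroup G] (hG : SixData G)
    {A : Subgroup G} (hA : IsLine A) (P : Subgroup G) (hP : P ∈ pts A) :
    Nat.card {g : G // MulAut.conj g • P = P} = 10 ∧ (∀ g : G, MulAut.conj g • P = P → g ∈ A) ∧
    ∀ y : G, orderOf y = 3 → MulAut.conj y • P ≠ P := by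
  have hc : Nat.card (⊤ : Subgroup G) = 360 := by rw [Subgroup.card_top, hG.card]
  have h5 : 5 ∣ Nat.card (⊤ : Subgroup G) := by rw [hc]; norm_num
  have h25 : ¬ 25 ∣ Nat.card (⊤ : Subgroup G) := by rw [hc]; norm_num
  obtain ⟨N, hN1, hN2⟩ := pts_norm ⊤ h5 h25 P ⟨hP.1, le_top⟩
  obtain ⟨N', hN1', hN2'⟩ := pts_norm A (by rw [hA.1]; norm_num) (by rw [hA.1]; norm_num) P hP
  rw [ncard_all_pts hG hA, hc] at hN2
  rw [hA.ncard_pts, hA.1] at hN2'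
  have hle : N' ≤ N := by
    intro g hg
    rw [hN1' g] at hg
    exact (hN1 g).2 ⟨trivial, hg.2⟩
  have heq : N' = N := Subgroup.eq_of_le_of_card_ge hle (by omega)
  have hmem : ∀ g : G, g ∈ N ↔ MulAut.conj g • P = P := by
    intro g
    rw [hN1 g]
    exact ⟨fun h => h.2, fun h => ⟨trivial, h⟩⟩
  refine ⟨?_, ?_, ?_⟩
  · rw [← Nat.card_congr (Equiv.subtypeEquivRight hmem)]
    omega
  · intro g hg
    rw [← hmem, ← heq, hN1'] at hg
    exact hg.1
  · intro y hy h
    rw [← hmem] at h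
    have := Subgroup.orderOf_dvd_natCard N h
    rw [hy] at this
    omega

theorem mem_of_shared {G : Type*} [Group G] [Finite G] [IsSimpleGroup G] (hG : SixData G)
    {A : Subgroup G} (hA : IsLine A) (P : Subgroup G) (hP : P ∈ pts A) (g : G)
    (hPg : P ∈ pts (MulAut.conj g • A)) : g ∈ A := by
  have h1 : MulAut.conj g⁻¹ • P ∈ pts A := by
    have := smul_pts (MulAut.conj g⁻¹) _ P hPg
    rwa [← mul_smul, ← map_mul, inv_mul_cancel, map_one, one_smul] at this
  obtain ⟨a, ha, h⟩ := pts_trans A (by rw [hA.1]; norm_num) (by rw [hA.1]; norm_num) _ P h1 hP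
  rw [← mul_smul, ← map_mul] at h
  have := (norm_point hG hA P hP).2.1 _ h.symm
  rw [Subgroup.mul_mem_cancel_left _ ha] at this
  simpa using this

/-- The conjugacy class of a subgroup. -/
def cls {G : Type*} [Group G] (A : Subgroup G) : Set (Subgroup G) :=
  {B | ∃ g : G, B = MulAut.conj g • A}

theorem cls_line {G : Type*} [Group G] {A B : Subgroup G} (hA : IsLine A) (hB : B ∈ cls A) :
    IsLine B := by
  obtain ⟨g, rfl⟩ := hB
  exact hA.smul _

theorem cls_symm {G : Type*} [Group G] {A B : Subgroup G} (hB : B ∈ cls A) : A ∈ cls B := by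
  obtain ⟨g, rfl⟩ := hB
  exact ⟨g⁻¹, by rw [← mul_smul, ← map_mul, inv_mul_cancel, map_one, one_smul]⟩

theorem cls_trans {G : Type*} [Group G] {A B C : Subgroup G} (hB : B ∈ cls A) (hC : C ∈ cls B) :
    C ∈ cls A := by
  obtain ⟨g, rfl⟩ := hB
  obtain ⟨h, rfl⟩ := hC
  exact ⟨h * g, by rw [← mul_smul, ← map_mul]⟩

theorem cls_self {G : Type*} [Group G] (A : Subgroup G) : A ∈ cls A :=
  ⟨1, by rw [map_one, one_smul]⟩

theorem cls_eq_of_shared {G : Type*} [Group G] [Finite G] [IsSimpleGroup G] (hG : SixData G)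
    {A B : Subgroup G} (hA : IsLine A) (hB : B ∈ cls A) (P : Subgroup G) (h1 : P ∈ pts A)
    (h2 : P ∈ pts B) : B = A := by
  obtain ⟨g, rfl⟩ := hB
  exact Subgroup.conj_smul_eq_self_of_mem (mem_of_shared hG hA P h1 g h2)

theorem mem_of_norm {G : Type*} [Group G] [Finite G] [IsSimpleGroup G] (hG : SixData G)
    {A : Subgroup G} (hA : IsLine A) (g : G) (h : MulAut.conj g • A = A) : g ∈ A := by
  obtain ⟨_, P, P', hP, hP', hne⟩ := id hA
  exact mem_of_shared hG hA P hP g (by rw [h]; exact hP)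

theorem ncard_cls {G : Type*} [Group G] [Finite G] [IsSimpleGroup G] (hG : SixData G)
    {A : Subgroup G} (hA : IsLine A) : (cls A).ncard = 6 := by
  obtain ⟨N, h1, h2⟩ := orb_stab ⊤ A
  have hNA : N = A := by
    ext g
    rw [h1]
    exact ⟨fun h => mem_of_norm hG hA g h.2,
      fun h => ⟨trivial, Subgroup.conj_smul_eq_self_of_mem h⟩⟩
  rw [hNA, hA.1, Subgroup.card_top, hG.card] at h2
  have : cls A = {Y : Subgroup G | ∃ m ∈ (⊤ : Subgroup G), Y = MulAut.conj m • A} := by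
    ext Y
    exact ⟨fun ⟨g, hg⟩ => ⟨g, trivial, hg⟩, fun ⟨g, _, hg⟩ => ⟨g, hg⟩⟩
  rw [this]
  omega

theorem exists_cls_point {G : Type*} [Group G] [Finite G] (hG : SixData G)
    {A : Subgroup G} (hA : IsLine A) (P : Subgroup G) (hP : Nat.card P = 5) :
    ∃ B ∈ cls A, P ∈ pts B := by
  have hc : Nat.card (⊤ : Subgroup G) = 360 := by rw [Subgroup.card_top, hG.card]
  obtain ⟨_, P0, -, hP0, -, -⟩ := id hA
  obtain ⟨g, -, rfl⟩ := pts_trans ⊤ (by rw [hc]; norm_num) (by rw [hc]; norm_num) P0 P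
    ⟨hP0.1, le_top⟩ ⟨hP, le_top⟩
  exact ⟨_, ⟨g, rfl⟩, smul_pts _ _ _ hP0⟩

/-- If every point of `A` is assigned a member of the class of `B` through it, all members occur. -/
theorem cls_surj {G : Type*} [Group G] [Finite G] [IsSimpleGroup G] (hG : SixData G)
    {A B : Subgroup G} (hA : IsLine A) (hB : IsLine B) (hAB : A ∉ cls B)
    (b : Subgroup G → Subgroup G) (hb : ∀ P ∈ pts A, b P ∈ cls B ∧ P ∈ pts (b P))
    (C : Subgroup G) (hC : C ∈ cls B) : ∃ P ∈ pts A, b P = C := by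
  have hinj : Set.InjOn b (pts A) := by
    intro P hP P' hP' h
    by_contra hne
    apply hAB
    have : A = b P := line_eq hG hA (cls_line hB (hb P hP).1) P P' hP (hb P hP).2 hP'
      (by rw [h]; exact (hb P' hP').2) hne
    rw [this]
    exact (hb P hP).1
  have hsub : b '' pts A ⊆ cls B := by
    rintro _ ⟨P, hP, rfl⟩
    exact (hb P hP).1
  have heq : b '' pts A = cls B := by
    apply Set.eq_of_subset_of_ncard_le hsub _ (Set.toFinite _)
    rw [hinj.ncard_image, hA.ncard_pts, ncard_cls hG hB]
  rw [← heq] at hC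
  exact hC

theorem exists_shared {G : Type*} [Group G] [Finite G] [IsSimpleGroup G] (hG : SixData G)
    {A B : Subgroup G} (hA : IsLine A) (hB : IsLine B) (hAB : A ∉ cls B) :
    ∃ P, P ∈ pts A ∧ P ∈ pts B := by
  have h : ∀ P : Subgroup G, ∃ C, P ∈ pts A → C ∈ cls B ∧ P ∈ pts C := by
    intro P
    by_cases hP : P ∈ pts A
    · obtain ⟨C, h1, h2⟩ := exists_cls_point hG hB P hP.1
      exact ⟨C, fun _ => ⟨h1, h2⟩⟩
    · exact ⟨⊥, fun h => absurd h hP⟩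
  choose b hb using h
  obtain ⟨P, hP, h⟩ := cls_surj hG hA hB hAB b hb B (cls_self B)
  refine ⟨P, hP, ?_⟩
  have := (hb P hP).2
  rwa [h] at this

theorem order_three_class {G : Type*} [Group G] [Finite G] [IsSimpleGroup G] (hG : SixData G)
    {A B : Subgroup G} (hA : IsLine A) (hB : IsLine B) (y : G) (hy : orderOf y = 3) (hyA : y ∈ A)
    (hyB : y ∈ B) : A ∈ cls B := by
  by_contra hAB
  obtain ⟨P, h1, h2⟩ := exists_shared hG hA hB hAB
  have h3 := smul_pts (MulAut.conj y) A P h1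
  have h4 := smul_pts (MulAut.conj y) B P h2
  rw [Subgroup.conj_smul_eq_self_of_mem hyA] at h3
  rw [Subgroup.conj_smul_eq_self_of_mem hyB] at h4
  have hne := (norm_point hG hA P h1).2.2 y hy
  apply hAB
  rw [line_eq hG hA hB _ _ h3 h4 h1 h2 hne]
  exact cls_self B

end

section
open scoped Pointwise

theorem fix_le {G : Type*} [Group G] [Finite G] [IsSimpleGroup G]
    (hnonab : ¬ ∀ a b : G, a * b = b * a) (hG : SixData G)
    {A : Subgroup G} (hA : IsLine A) (y : G) (hy : orderOf y = 3) :
    {B : Subgroup G | B ∈ cls A ∧ y ∈ B}.ncard ≤ 3 := by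
  classical
  have : Fact (Nat.Prime 3) := ⟨by norm_num⟩
  have : Fintype (cls A) := Fintype.ofFinite _
  let f : Function.End (cls A) := fun B => ⟨MulAut.conj y • (B : Subgroup G),
    cls_trans B.2 ⟨y, rfl⟩⟩
  have hf : ∀ B, ((f B : cls A) : Subgroup G) = MulAut.conj y • (B : Subgroup G) := fun B => rfl
  have hf3 : f ^ 3 ^ 1 = 1 := by
    funext B
    apply Subtype.ext
    change MulAut.conj y • MulAut.conj y • MulAut.conj y • (B : Subgroup G) = B
    rw [← mul_smul, ← mul_smul, ← map_mul, ← map_mul]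
    have h3 : y * (y * y) = 1 := by
      rw [← pow_orderOf_eq_one y, hy, pow_succ, pow_two, mul_assoc]
    rw [← mul_assoc] at h3
    rw [h3, map_one, one_smul]
  have hmod := Equiv.Perm.card_fixedPoints_modEq hf3
  rw [← Nat.card_eq_fintype_card, ← Nat.card_eq_fintype_card, Nat.card_coe_set_eq,
    ncard_cls hG hA] at hmod
  have himg : {B : Subgroup G | B ∈ cls A ∧ y ∈ B} = Subtype.val '' (Function.fixedPoints f) := by
    ext B
    constructor
    · rintro ⟨h1, h2⟩
      refine ⟨⟨B, h1⟩, ?_, rfl⟩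
      exact Subtype.ext (Subgroup.conj_smul_eq_self_of_mem h2)
    · rintro ⟨B, hB, rfl⟩
      exact ⟨B.2, mem_of_norm hG (cls_line hA B.2) y (congrArg Subtype.val hB)⟩
  have hcard : {B : Subgroup G | B ∈ cls A ∧ y ∈ B}.ncard = Nat.card (Function.fixedPoints f) := by
    rw [himg, Set.ncard_image_of_injective _ Subtype.val_injective, Nat.card_coe_set_eq]
  rw [← hcard] at hmod
  have hsub : {B : Subgroup G | B ∈ cls A ∧ y ∈ B} ⊆ cls A := fun B hB => hB.1
  have hle := Set.ncard_le_ncard hsub (Set.toFinite _)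
  rw [ncard_cls hG hA] at hle
  have hne : {B : Subgroup G | B ∈ cls A ∧ y ∈ B}.ncard ≠ 6 := by
    intro h6
    have heq : {B : Subgroup G | B ∈ cls A ∧ y ∈ B} = cls A :=
      Set.eq_of_subset_of_ncard_le hsub (by rw [h6, ncard_cls hG hA]) (Set.toFinite _)
    have h1 : MulAut.conj y = 1 := by
      refine aut_moves A (ne_bot_of_line hA) (hA.ne_top hG) _ ?_
      intro g
      have : MulAut.conj g • A ∈ {B : Subgroup G | B ∈ cls A ∧ y ∈ B} := by
        rw [heq]; exact ⟨g, rfl⟩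
      exact Subgroup.conj_smul_eq_self_of_mem this.2
    have hy1 : y = 1 := by
      apply center_trivial hnonab
      intro g
      have := congrArg (fun κ : MulAut G => κ g) h1
      simp only [MulAut.conj_apply, MulAut.one_apply] at this
      rwa [mul_inv_eq_iff_eq_mul] at this
    rw [hy1, orderOf_one] at hy
    omega
  generalize {B : Subgroup G | B ∈ cls A ∧ y ∈ B}.ncard = a at *
  unfold Nat.ModEq at hmod
  omega

theorem line_twenty {G : Type*} [Group G] (hG : SixData G)
    {A : Subgroup G} (hA : IsLine A) : 20 ≤ {y : G | y ∈ A ∧ orderOf y = 3}.ncard := by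
  obtain ⟨_, P, P', hP, hP', hne⟩ := id hA
  rcases hG.gen A P P' hP hP' hne with h | h
  · exact absurd h (hA.ne_top hG)
  · exact h.2

theorem cls_disjoint {G : Type*} [Group G] {A B : Subgroup G} (h : A ∉ cls B) :
    Disjoint (cls A) (cls B) := by
  rw [Set.disjoint_left]
  intro C h1 h2
  exact h (cls_trans h2 (cls_symm h1))

theorem no_three {G : Type*} [Group G] [Finite G] [IsSimpleGroup G]
    (hnonab : ¬ ∀ a b : G, a * b = b * a) (hG : SixData G)
    {A B C : Subgroup G} (hA : IsLine A) (hB : IsLine B) (hC : IsLine C)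
    (hAB : A ∉ cls B) (hAC : A ∉ cls C) (hBC : B ∉ cls C) : False := by
  classical
  have hfin : ∀ s : Set (Subgroup G), s.Finite := fun s => Set.toFinite s
  have hfin2 : ∀ s : Set G, s.Finite := fun s => Set.toFinite s
  have hcard : (cls A ∪ cls B ∪ cls C).ncard = 18 := by
    rw [Set.ncard_union_eq _ (hfin _) (hfin _), Set.ncard_union_eq (cls_disjoint hAB) (hfin _) (hfin _),
      ncard_cls hG hA, ncard_cls hG hB, ncard_cls hG hC]
    rw [Set.disjoint_union_left]
    exact ⟨cls_disjoint hAC, cls_disjoint hBC⟩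
  have hline : ∀ M ∈ cls A ∪ cls B ∪ cls C, IsLine M := by
    rintro M ((h | h) | h)
    · exact cls_line hA h
    · exact cls_line hB h
    · exact cls_line hC h
  have hcl : ∀ M ∈ cls A ∪ cls B ∪ cls C, ∀ N ∈ cls M, N ∈ cls A ∪ cls B ∪ cls C := by
    rintro M ((h | h) | h) N hN
    · exact Or.inl (Or.inl (cls_trans h hN))
    · exact Or.inl (Or.inr (cls_trans h hN))
    · exact Or.inr (cls_trans h hN)
  have key := Finset.card_mul_le_card_mul (fun (M : Subgroup G) (y : G) => y ∈ M)
    (s := (hfin (cls A ∪ cls B ∪ cls C)).toFinset) (t := (hfin2 {y : G | orderOf y = 3}).toFinset)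
    (m := 20) (n := 3) ?_ ?_
  · rw [← Set.ncard_eq_toFinset_card, ← Set.ncard_eq_toFinset_card, hcard] at key
    have := hG.three
    omega
  · intro M hM
    rw [Set.Finite.mem_toFinset] at hM
    refine (line_twenty hG (hline M hM)).trans ?_
    rw [Set.ncard_eq_toFinset_card _ (hfin2 _)]
    apply Finset.card_le_card
    intro y hy
    rw [Set.Finite.mem_toFinset] at hy
    rw [Finset.mem_bipartiteAbove, Set.Finite.mem_toFinset]
    exact ⟨hy.2, hy.1⟩
  · intro y hy
    rw [Set.Finite.mem_toFinset] at hy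
    by_cases hex : ∃ M ∈ cls A ∪ cls B ∪ cls C, y ∈ M
    · obtain ⟨M, hM, hyM⟩ := hex
      refine le_trans ?_ (fix_le hnonab hG (hline M hM) y hy)
      rw [Set.ncard_eq_toFinset_card _ (hfin _)]
      apply Finset.card_le_card
      intro N hN
      rw [Finset.mem_bipartiteBelow, Set.Finite.mem_toFinset] at hN
      rw [Set.Finite.mem_toFinset]
      exact ⟨order_three_class hG (hline N hN.1) (hline M hM) y hy hN.2 hyM, hN.2⟩
    · have : Finset.bipartiteBelow (fun (M : Subgroup G) (y : G) => y ∈ M)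
          (hfin (cls A ∪ cls B ∪ cls C)).toFinset y = ∅ := by
        rw [Finset.eq_empty_iff_forall_notMem]
        intro N hN
        rw [Finset.mem_bipartiteBelow, Set.Finite.mem_toFinset] at hN
        exact hex ⟨N, hN.1, hN.2⟩
      rw [this]
      simp

theorem goodAut_six {G : Type*} [Group G] [Finite G] [IsSimpleGroup G]
    (hnonab : ¬ ∀ a b : G, a * b = b * a) (hG : SixData G) (κ : MulAut G) (hκ : κ ≠ 1) :
    GoodAut κ := by
  by_contra hbad
  -- every point is fixed or lies on an invariant line
  have hpt : ∀ P : Subgroup G, Nat.card P = 5 → κ • P = P ∨ ∃ M, IsLine M ∧ κ • M = M ∧ P ∈ pts M := by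
    intro P hP
    by_contra hno
    push Not at hno
    apply hbad
    have : Fact (Nat.Prime 5) := ⟨by norm_num⟩
    have hcyc : IsCyclic P := isCyclic_of_prime_card hP
    obtain ⟨x, hx⟩ := hcyc.exists_generator
    have hxP : Subgroup.zpowers (x : G) = P := by
      ext z
      constructor
      · rintro ⟨i, rfl⟩
        exact P.zpow_mem x.2 i
      · intro hz
        obtain ⟨i, hi⟩ := hx ⟨z, hz⟩
        exact ⟨i, congrArg Subtype.val hi⟩
    refine ⟨x, ?_, ?_⟩
    · rw [← Nat.card_zpowers, hxP, hP]
      exact Nat.prime_five.isPrimePow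
    · intro M hM hκM
      have hPM : P ≤ M := by rw [← hxP, Subgroup.zpowers_le]; exact hM
      have h1 : P ∈ pts M := ⟨hP, hPM⟩
      have h2 : κ • P ∈ pts M := by
        have := smul_pts κ M P h1
        rwa [hκM] at this
      rcases hG.gen M _ _ h2 h1 hno.1 with h | h
      · exact h
      · exact absurd h1 (hno.2 M ⟨h.1, _, _, h2, h1, hno.1⟩ hκM)
  have : Fact (Nat.Prime 5) := ⟨by norm_num⟩
  obtain ⟨x0, hx0⟩ := exists_prime_orderOf_dvd_card' (G := G) 5 (by rw [hG.card]; norm_num)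
  have hP0 : Nat.card (Subgroup.zpowers x0) = 5 := by rw [Nat.card_zpowers, hx0]
  have hM : ∃ M : Subgroup G, IsLine M ∧ κ • M = M := by
    by_contra hno
    apply hκ
    refine aut_moves (Subgroup.zpowers x0) ?_ (zpowers_ne_top hnonab x0) κ ?_
    · intro h
      rw [h, Subgroup.card_bot] at hP0
      omega
    · intro g
      rcases hpt (MulAut.conj g • Subgroup.zpowers x0) (by rw [card_aut_smul, hP0]) with h | h
      · exact h
      · obtain ⟨M, h1, h2, -⟩ := h
        exact absurd ⟨M, h1, h2⟩ hno
  obtain ⟨M, hM, hκM⟩ := hM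
  have hA : ∃ g : G, κ • MulAut.conj g • M ≠ MulAut.conj g • M := by
    by_contra hno
    push Not at hno
    exact hκ (aut_moves M (ne_bot_of_line hM) (hM.ne_top hG) κ hno)
  obtain ⟨g, hg⟩ := hA
  have hAM : MulAut.conj g • M ∈ cls M := ⟨g, rfl⟩
  have hκA : κ • MulAut.conj g • M ∈ cls M := by
    refine ⟨κ g, ?_⟩
    rw [← mul_smul, aut_conj, mul_smul, hκM]
  generalize MulAut.conj g • M = A at hg hAM hκA
  have hA : IsLine A := cls_line hM hAM
  have hb : ∀ P : Subgroup G, ∃ B, P ∈ pts A → IsLine B ∧ κ • B = B ∧ P ∈ pts B ∧ B ∉ cls A := by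
    intro P
    by_cases hP : P ∈ pts A
    · rcases hpt P hP.1 with h | ⟨B, h1, h2, h3⟩
      · exfalso
        apply hg
        have h4 := smul_pts κ A P hP
        rw [h] at h4
        exact cls_eq_of_shared hG hA (cls_trans (cls_symm hAM) hκA) P hP h4
      · refine ⟨B, fun _ => ⟨h1, h2, h3, ?_⟩⟩
        intro hBA
        have := cls_eq_of_shared hG hA hBA P hP h3
        rw [this] at h2
        exact hg h2
    · exact ⟨⊥, fun h => absurd h hP⟩
  choose b hb using hb
  obtain ⟨_, P1, -, hP1, -, -⟩ := id hA
  have hB := hb P1 hP1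
  have hcls : ∀ P ∈ pts A, b P ∈ cls (b P1) ∧ P ∈ pts (b P) := by
    intro P hP
    refine ⟨?_, (hb P hP).2.2.1⟩
    by_contra hno
    exact no_three hnonab hG (hb P hP).1 hB.1 hA hno (hb P hP).2.2.2 hB.2.2.2
  have hsurj := cls_surj hG hA hB.1 (fun h => hB.2.2.2 (cls_symm h)) b hcls
  apply hκ
  refine aut_moves (b P1) (ne_bot_of_line hB.1) (hB.1.ne_top hG) κ ?_
  intro g
  obtain ⟨P, hP, hPe⟩ := hsurj (MulAut.conj g • b P1) ⟨g, rfl⟩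
  rw [← hPe]
  exact (hb P hP).2.1

end

section
open scoped Pointwise

theorem MobAct.par_const {E L Ω : Type*} [Field E] [Finite E] (p : ℕ) [Fact p.Prime] [CharP E p]
    [Group L] [Fintype L] [MulAction L Ω] [Fintype Ω]
    [FaithfulSMul L Ω] (h : MobAct E L Ω) (ω η : Ω) (hη : η ∈ MulAction.orbit L ω) :
    parQ L η = parQ L ω := by
  obtain ⟨m, h1, -⟩ := h.orbData p ω
  obtain ⟨m', h2, -⟩ := h.orbData p η
  rw [MulAction.orbit_eq_iff.2 hη] at h2
  have he := h1.card.symm.trans h2.card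
  have he2 := Nat.eq_of_mul_eq_mul_left h1.Npos he
  obtain ⟨a, ha⟩ := h1.ppow
  obtain ⟨b, hb⟩ := h2.ppow
  have c1 : Nat.Coprime (parQ L ω) m' := by rw [ha]; exact Nat.Coprime.pow_left _ h2.cop.symm
  have c2 : Nat.Coprime (parQ L η) m := by rw [hb]; exact Nat.Coprime.pow_left _ h1.cop.symm
  apply Nat.dvd_antisymm
  · exact c2.dvd_of_dvd_mul_right (by rw [he2]; exact Dvd.intro _ rfl)
  · exact c1.dvd_of_dvd_mul_right (by rw [← he2]; exact Dvd.intro _ rfl)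

theorem MobAct.par_count_ge {E L Ω : Type*} [Field E] [Finite E] (p : ℕ) [Fact p.Prime] [CharP E p]
    [Group L] [Fintype L] [MulAction L Ω] [Fintype Ω]
    [FaithfulSMul L Ω] (h : MobAct E L Ω) (ω : Ω) :
    Nat.card (MulAction.orbit L ω) * (parQ L ω - 1) ≤ {y : L | orderOf y = p}.ncard := by
  classical
  have key := Finset.card_mul_le_card_mul (fun (η : Ω) (y : L) => y • η = η)
    (s := (Set.toFinite (MulAction.orbit L ω)).toFinset)
    (t := (Set.toFinite {y : L | orderOf y = p}).toFinset)
    (m := parQ L ω - 1) (n := 1) ?_ ?_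
  · rw [← Set.ncard_eq_toFinset_card, ← Set.ncard_eq_toFinset_card, mul_one] at key
    exact key
  · intro η hη
    rw [Set.Finite.mem_toFinset] at hη
    rw [← h.par_const p ω η hη]
    unfold parQ
    rw [Nat.add_sub_cancel, Set.ncard_eq_toFinset_card _ (Set.toFinite _)]
    apply Finset.card_le_card
    intro y hy
    rw [Set.Finite.mem_toFinset] at hy
    rw [Finset.mem_bipartiteAbove, Set.Finite.mem_toFinset]
    exact ⟨h.order_of_parSet p η y hy, hy.2.1⟩
  · intro y hy
    rw [Set.Finite.mem_toFinset] at hy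
    rw [Finset.card_le_one]
    intro a ha b hb
    rw [Finset.mem_bipartiteBelow] at ha hb
    exact ((h.mem_parSet p a y hy ha.2).2.2 b hb.2).symm

theorem MobAct.par_count_le {E L Ω : Type*} [Field E] [Finite E] (p : ℕ) [Fact p.Prime] [CharP E p]
    [Group L] [Fintype L] [MulAction L Ω] [Fintype Ω]
    [FaithfulSMul L Ω] (h : MobAct E L Ω) (ω : Ω)
    (hN : ¬ p ∣ Nat.card (MulAction.orbit L ω)) :
    {y : L | orderOf y = p}.ncard ≤ Nat.card (MulAction.orbit L ω) * (parQ L ω - 1) := by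
  classical
  have key := Finset.card_mul_le_card_mul' (fun (η : Ω) (y : L) => y • η = η)
    (s := (Set.toFinite (MulAction.orbit L ω)).toFinset)
    (t := (Set.toFinite {y : L | orderOf y = p}).toFinset)
    (m := parQ L ω - 1) (n := 1) ?_ ?_
  · rw [← Set.ncard_eq_toFinset_card, ← Set.ncard_eq_toFinset_card, mul_one] at key
    exact key
  · intro y hy
    rw [Set.Finite.mem_toFinset] at hy
    let f : Function.End (MulAction.orbit L ω) := fun B => y • B
    have hf : f ^ p ^ 1 = 1 := by
      have : f = MulAction.toEndHom y := rfl
      rw [this, ← map_pow, pow_one]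
      have hy2 : orderOf y = p := hy
      rw [← hy2, pow_orderOf_eq_one, map_one]
    have hmod := Equiv.Perm.card_fixedPoints_modEq hf
    have hpos : 0 < Fintype.card (Function.fixedPoints f) := by
      rw [Nat.pos_iff_ne_zero]
      intro h0
      rw [h0] at hmod
      apply hN
      rw [Nat.card_eq_fintype_card]
      exact (Nat.modEq_zero_iff_dvd).1 hmod
    obtain ⟨⟨η, hη⟩⟩ := Fintype.card_pos_iff.1 hpos
    apply Finset.card_pos.2
    refine ⟨η, ?_⟩
    rw [Finset.mem_bipartiteBelow, Set.Finite.mem_toFinset]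
    exact ⟨η.2, congrArg Subtype.val hη⟩
  · intro η hη
    rw [Set.Finite.mem_toFinset] at hη
    rw [← h.par_const p ω η hη]
    unfold parQ
    rw [Nat.add_sub_cancel, Set.ncard_eq_toFinset_card _ (Set.toFinite _)]
    apply Finset.card_le_card
    intro y hy
    rw [Finset.mem_bipartiteAbove, Set.Finite.mem_toFinset] at hy
    rw [Set.Finite.mem_toFinset]
    exact h.mem_parSet p η y hy.1 hy.2

theorem eq_top_of_card {G : Type*} [Group G] [Finite G] [IsSimpleGroup G] (M : Subgroup G)
    (hM : M ≠ ⊥) (h : Nat.card G ≤ 2 * Nat.card M) : M = ⊤ := by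
  have h1 := M.index_mul_card
  have h2 : 0 < Nat.card M := Nat.card_pos
  have h3 : M.index ≤ 2 := by
    rw [← h1] at h
    exact Nat.le_of_mul_le_mul_right h h2
  have h4 : M.index ≠ 0 := Subgroup.index_ne_zero_of_finite
  rcases (show M.index = 1 ∨ M.index = 2 by omega) with h5 | h5
  · exact Subgroup.index_eq_one.1 h5
  · exact ((Subgroup.normal_of_index_eq_two h5).eq_bot_or_eq_top).resolve_left hM

theorem zpowers_mk_ne {G : Type*} [Group G] (M : Subgroup G) (x y : G) (hx : x ∈ M) (hy : y ∈ M)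
    (h : Subgroup.zpowers x ≠ Subgroup.zpowers y) :
    Subgroup.zpowers (⟨x, hx⟩ : M) ≠ Subgroup.zpowers (⟨y, hy⟩ : M) := by
  intro he
  apply h
  have := congrArg (Subgroup.map M.subtype) he
  rw [MonoidHom.map_zpowers, MonoidHom.map_zpowers] at this
  exact this

theorem ne_bot_of_mem_order {G : Type*} [Group G] (M : Subgroup G) (x : G) (hx : x ∈ M)
    (h : orderOf x ≠ 1) : M ≠ ⊥ := by
  rintro rfl
  rw [Subgroup.mem_bot] at hx
  rw [hx, orderOf_one] at h
  exact h rfl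

theorem good_one (p : ℕ) [Fact p.Prime] (hp5 : 5 ≤ p) {E G Ω : Type*} [Field E] [Finite E]
    [CharP E p] [Group G] [Finite G] [IsSimpleGroup G] (hnonab : ¬ ∀ a b : G, a * b = b * a)
    [MulAction G Ω] [Fintype Ω] [FaithfulSMul G Ω] (h : MobAct E G Ω) (z : ℕ) (hz : z = 1 ∨ z = 2)
    (hcard : Nat.card G * z = p * (p ^ 2 - 1)) (κ : MulAut G) (hκ : κ ≠ 1) : GoodAut κ := by
  have hp : p.Prime := Fact.out
  have hz2 : z ≤ 2 := by omega
  have hz0 : 0 < z := by omega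
  have hpz : Nat.Coprime p z := by
    rw [hp.coprime_iff_not_dvd]
    intro hd
    have := Nat.le_of_dvd hz0 hd
    omega
  have hpG : p ∣ Nat.card G := by
    apply hpz.dvd_of_dvd_mul_right
    rw [hcard]
    exact Dvd.intro _ rfl
  have hpp : ¬ p ^ 2 ∣ Nat.card G := by
    intro hd
    have h1 : p ^ 2 ∣ p * (p ^ 2 - 1) := by rw [← hcard]; exact hd.mul_right _
    rw [pow_two, Nat.mul_dvd_mul_iff_left hp.pos] at h1
    have h2 : p ∣ p * p - (p * p - 1) := Nat.dvd_sub (Dvd.intro _ rfl) h1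
    have h3 : p * p - (p * p - 1) = 1 := by
      have : 0 < p * p := Nat.mul_pos hp.pos hp.pos
      omega
    rw [h3] at h2
    exact hp.one_lt.ne' (Nat.dvd_one.1 h2)
  obtain ⟨x, hx⟩ := exists_prime_orderOf_dvd_card' (G := G) p hpG
  refine goodAut_of_gen hnonab κ hκ p hp.isPrimePow x hx ?_
  intro x y hx hy hne M hxM hyM
  have : Fintype M := Fintype.ofFinite M
  have key := (h.subgroup M).genB p hp5 (fun hd => hpp (hd.trans (Subgroup.card_subgroup_dvd_card M)))
    ⟨x, hxM⟩ ⟨y, hyM⟩ (by rw [Subgroup.orderOf_mk, hx]) (by rw [Subgroup.orderOf_mk, hy])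
    (zpowers_mk_ne M x y hxM hyM hne)
  apply eq_top_of_card M (ne_bot_of_mem_order M x hxM (by rw [hx]; exact hp.one_lt.ne'))
  have h1 : (p + 1) * p * (p - 1) = p * (p ^ 2 - 1) := by
    have : p ^ 2 - 1 = (p + 1) * (p - 1) := by
      have := Nat.sq_sub_sq p 1
      simpa using this
    rw [this]; ring
  have h2 : Nat.card G ≤ Nat.card G * z := Nat.le_mul_of_pos_right _ hz0
  omega

theorem good_gen (p f : ℕ) [Fact p.Prime] (hf : 2 ≤ f) (h9 : p ^ f ≠ 9)
    {E G Ω : Type*} [Field E] [Finite E]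
    [CharP E p] [Group G] [Finite G] [IsSimpleGroup G] (hnonab : ¬ ∀ a b : G, a * b = b * a)
    [MulAction G Ω] [Fintype Ω] [FaithfulSMul G Ω] (h : MobAct E G Ω) (z : ℕ) (hz : z = 1 ∨ z = 2)
    (hcard : Nat.card G * z = p ^ f * ((p ^ f) ^ 2 - 1)) (κ : MulAut G) (hκ : κ ≠ 1) :
    GoodAut κ := by
  have hp : p.Prime := Fact.out
  have hz0 : 0 < z := by omega
  obtain ⟨r, j, hr, hr2, hj, hd, hn7, hord⟩ := exists_n p f hp hf h9
  have hq0 : 0 < p ^ f := Nat.pow_pos hp.pos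
  have hfac : (p ^ f) ^ 2 - 1 = (p ^ f + 1) * (p ^ f - 1) := by
    have := Nat.sq_sub_sq (p ^ f) 1
    simpa using this
  have hrp : r ≠ p := by
    rintro rfl
    have h1 : r ∣ r ^ f + 1 := (dvd_pow_self r hj.ne').trans hd
    have h2 : r ∣ 1 := (Nat.dvd_add_right (dvd_pow_self r (by omega))).1 h1
    exact hr.one_lt.ne' (Nat.dvd_one.1 h2)
  have hnp : Nat.Coprime (r ^ j) p := Nat.Coprime.pow_left _ ((Nat.coprime_primes hr hp).2 hrp)
  have hodd : Odd (r ^ j) := (hr.odd_of_ne_two hr2).pow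
  have hnz : Nat.Coprime (r ^ j) z := by
    rcases hz with rfl | rfl
    · exact Nat.coprime_one_right _
    · exact Nat.coprime_two_right.2 hodd
  have hnG : r ^ j ∣ Nat.card G := by
    apply hnz.dvd_of_dvd_mul_right
    rw [hcard, hfac]
    exact (hd.mul_right _).mul_left _
  have : Fintype G := Fintype.ofFinite G
  -- powers of p dividing the group order
  have hpa : ∀ a, p ^ a ∣ Nat.card G → a ≤ f := by
    intro a ha
    have h1 : p ^ a ∣ p ^ f * ((p ^ f) ^ 2 - 1) := by rw [← hcard]; exact ha.mul_right _
    have h2 : Nat.Coprime p ((p ^ f) ^ 2 - 1) := by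
      rw [hp.coprime_iff_not_dvd]
      intro h3
      have h4 : p ∣ (p ^ f) ^ 2 := by
        rw [← pow_mul]
        exact dvd_pow_self p (by omega)
      have h5 := Nat.dvd_sub h4 h3
      have h6 : 0 < (p ^ f) ^ 2 := Nat.pow_pos hq0
      have h7 : (p ^ f) ^ 2 - ((p ^ f) ^ 2 - 1) = 1 := by omega
      rw [h7] at h5
      exact hp.one_lt.ne' (Nat.dvd_one.1 h5)
    have h3 := (h2.pow_left a).dvd_of_dvd_mul_right h1
    exact (Nat.pow_dvd_pow_iff_le_right hp.one_lt).1 h3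
  obtain ⟨x, hx⟩ := h.exists_order p r j hr hrp hr2 hj hnG
  refine goodAut_of_gen hnonab κ hκ (r ^ j) (hr.isPrimePow.pow hj.ne') x hx ?_
  intro x y hx hy hne M hxM hyM
  have : Fintype M := Fintype.ofFinite M
  have hMG : Nat.card M ∣ Nat.card G := Subgroup.card_subgroup_dvd_card M
  have key := (h.subgroup M).genA p (r ^ j) hodd hn7 hnp ?_
    ⟨x, hxM⟩ ⟨y, hyM⟩ (by rw [Subgroup.orderOf_mk, hx]) (by rw [Subgroup.orderOf_mk, hy])
    (zpowers_mk_ne M x y hxM hyM hne)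
  · rcases key with ⟨ω, h1, h2, h3, -⟩ | ⟨h1, h2, -, -⟩
    · apply eq_top_of_card M (ne_bot_of_mem_order M x hxM (by rw [hx]; omega))
      obtain ⟨h4, a, ha⟩ := (h.subgroup M).parQ_dvd p ω
      rw [ha] at h1 h2 h3 h4
      have haf := hpa a (h4.trans hMG)
      have h5 : r ^ j ∣ p ^ (2 * a) - 1 := by
        have : p ^ (2 * a) - 1 = (p ^ a + 1) * (p ^ a - 1) := by
          have := Nat.sq_sub_sq (p ^ a) 1
          rw [mul_comm 2 a, pow_mul]
          simpa using this
        rw [this]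
        exact h1.mul_right _
      have h6 : f ∣ a := (Nat.mul_dvd_mul_iff_left (by norm_num)).1 (hord _ h5)
      have ha0 : 0 < a := by
        rw [Nat.pos_iff_ne_zero]
        rintro rfl
        norm_num at h2
      have h7 : a = f := le_antisymm haf (Nat.le_of_dvd ha0 h6)
      rw [h7] at h3
      have h8 : (p ^ f + 1) * p ^ f * (p ^ f - 1) = p ^ f * ((p ^ f) ^ 2 - 1) := by
        rw [hfac]; ring
      have h2 : Nat.card G ≤ Nat.card G * z := Nat.le_mul_of_pos_right _ hz0
      rw [h8, ← hcard] at h3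
      omega
    · exfalso
      rw [h1, h2] at hord
      have := Nat.le_of_dvd (by norm_num) (hord 4 (by norm_num))
      have hf2 : f = 2 := by omega
      rw [h2, hf2] at h9
      norm_num at h9
  · intro a h1 h2
    have h3 := hord a h2
    have h4 := hpa a (h1.trans hMG)
    rcases Nat.eq_zero_or_pos a with rfl | h5
    · rw [pow_zero]
    · have := Nat.le_of_dvd h5 h3
      omega

theorem five_div (a : ℕ) (h : 3 ^ a ∣ 360) : a ≤ 2 := by
  by_contra hc
  have h1 : 3 ^ 3 ∣ 360 := (pow_dvd_pow 3 (by omega)).trans h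
  norm_num at h1

theorem genA_nine {E L Ω : Type*} [Field E] [Finite E] [Fact (Nat.Prime 3)] [CharP E 3]
    [Group L] [Fintype L] [MulAction L Ω] [Fintype Ω]
    [FaithfulSMul L Ω] (h : MobAct E L Ω) (hL : Nat.card L ∣ 360)
    (x y : L) (hx : orderOf x = 5) (hy : orderOf y = 5)
    (hxy : Subgroup.zpowers x ≠ Subgroup.zpowers y) :
    (360 ≤ Nat.card L ∧ {y : L | orderOf y = 3}.ncard ≤ 80) ∨
    (Nat.card L = 60 ∧ 20 ≤ {y : L | orderOf y = 3}.ncard) := by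
  have key := h.genA 3 5 (by decide) (Or.inr ⟨le_rfl, le_rfl⟩) (by decide) ?_ x y hx hy hxy
  · rcases key with ⟨ω, h1, h2, h3, h4⟩ | ⟨-, -, h1, ω, h2, h3⟩
    · left
      obtain ⟨h5, a, ha⟩ := h.parQ_dvd 3 ω
      have h6 : parQ L ω = 9 := by
        have := five_div a (by rw [← ha]; exact h5.trans hL)
        interval_cases a
        · omega
        · rw [ha] at h1; norm_num at h1
        · exact ha
      rw [h6] at h3 h4
      refine ⟨by omega, ?_⟩
      have := h.par_count_le 3 ω (by rw [h4]; norm_num)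
      rwa [h4, h6] at this
    · right
      refine ⟨h1, ?_⟩
      have := h.par_count_ge 3 ω
      rwa [h2, h3] at this
  · intro a h1 h2
    have := five_div a (h1.trans hL)
    interval_cases a
    · rfl
    · norm_num at h2
    · norm_num at h2

theorem five_gen {G : Type*} [Group G] (P : Subgroup G) (hP : Nat.card P = 5) :
    ∃ x : G, x ∈ P ∧ orderOf x = 5 ∧ Subgroup.zpowers x = P := by
  have : Fact (Nat.Prime 5) := ⟨by norm_num⟩
  have hcyc : IsCyclic P := isCyclic_of_prime_card hP
  obtain ⟨x, hx⟩ := hcyc.exists_generator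
  have hxP : Subgroup.zpowers (x : G) = P := by
    ext z
    constructor
    · rintro ⟨i, rfl⟩
      exact P.zpow_mem x.2 i
    · intro hz
      obtain ⟨i, hi⟩ := hx ⟨z, hz⟩
      exact ⟨i, congrArg Subtype.val hi⟩
  exact ⟨x, x.2, by rw [← Nat.card_zpowers, hxP, hP], hxP⟩

theorem sixData {E G Ω : Type*} [Field E] [Finite E] [CharP E 3] [Group G] [Finite G]
    [IsSimpleGroup G] (hnonab : ¬ ∀ a b : G, a * b = b * a)
    [MulAction G Ω] [Fintype Ω] [FaithfulSMul G Ω] (h : MobAct E G Ω)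
    (hcard : Nat.card G = 360) : SixData G := by
  have : Fact (Nat.Prime 3) := ⟨by norm_num⟩
  have : Fact (Nat.Prime 5) := ⟨by norm_num⟩
  refine ⟨hcard, ?_, ?_⟩
  · intro M P P' hP hP' hne
    have : Fintype M := Fintype.ofFinite M
    obtain ⟨x, hxP, hx, rfl⟩ := five_gen P hP.1
    obtain ⟨y, hyP, hy, rfl⟩ := five_gen P' hP'.1
    have hMG : Nat.card M ∣ 360 := by rw [← hcard]; exact Subgroup.card_subgroup_dvd_card M
    rcases genA_nine (h.subgroup M) hMG ⟨x, hP.2 hxP⟩ ⟨y, hP'.2 hyP⟩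
      (by rw [Subgroup.orderOf_mk, hx]) (by rw [Subgroup.orderOf_mk, hy])
      (zpowers_mk_ne M x y _ _ hne) with h1 | h1
    · left
      apply Subgroup.eq_top_of_le_card
      rw [hcard]
      exact h1.1
    · right
      refine ⟨h1.1, h1.2.trans ?_⟩
      rw [← Set.ncard_image_of_injective _ M.subtype_injective]
      apply Set.ncard_le_ncard _ (Set.toFinite _)
      rintro _ ⟨y, hy, rfl⟩
      refine ⟨y.2, ?_⟩
      have : orderOf y = 3 := hy
      rw [← this]
      exact Subgroup.orderOf_coe y
  · have : Fintype G := Fintype.ofFinite G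
    obtain ⟨x, hx⟩ := exists_prime_orderOf_dvd_card' (G := G) 5 (by rw [hcard]; norm_num)
    have hg : ∃ g : G, MulAut.conj g • Subgroup.zpowers x ≠ Subgroup.zpowers x := by
      by_contra hno
      push Not at hno
      rcases (normal_of_conj_smul _ hno).eq_bot_or_eq_top with h1 | h1
      · exact ne_bot_of_mem_order _ x (Subgroup.mem_zpowers x) (by rw [hx]; norm_num) h1
      · exact zpowers_ne_top hnonab x h1
    obtain ⟨g, hg⟩ := hg
    rw [smul_zpowers] at hg
    rcases genA_nine h (by rw [hcard]) _ x (by rw [orderOf_aut, hx]) hx hg with h1 | h1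
    · exact h1.2
    · rw [hcard] at h1
      omega

theorem good_psl (p f : ℕ) [Fact p.Prime] (hf : 0 < f) (hq4 : 4 ≤ p ^ f) (G : Type*) [Group G]
    [Finite G] [IsSimpleGroup G] (hnonab : ¬ ∀ a b : G, a * b = b * a)
    (φ : G ≃* Matrix.ProjectiveSpecialLinearGroup (Fin 2) (GaloisField p f)) (κ : MulAut G)
    (hκ : κ ≠ 1) : GoodAut κ := by
  have hp : p.Prime := Fact.out
  obtain ⟨E, hE, hEf, hEc, Ω, hΩ, act, hfa, h⟩ := psl_mob p (GaloisField p f) G φ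
  obtain ⟨z, hz, hz2, hcard⟩ := card_PSL (GaloisField p f)
  rw [GaloisField.card p f hf.ne'] at hz2 hcard
  rw [← Nat.card_congr φ.toEquiv] at hcard
  rcases (show f = 1 ∨ 2 ≤ f by omega) with rfl | hf2
  · rw [pow_one] at hcard hq4
    have hp5 : 5 ≤ p := by
      rcases Nat.lt_or_ge p 5 with h5 | h5
      · have : p = 4 := by omega
        rw [this] at hp
        norm_num at hp
      · exact h5
    exact good_one p hp5 hnonab h z hz hcard κ hκ
  · by_cases h9 : p ^ f = 9
    · have hp3 : p = 3 := by
        have h1 : p ∣ 3 ^ 2 := by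
          have : p ∣ p ^ f := dvd_pow_self p (by omega)
          rwa [h9] at this
        exact (Nat.prime_dvd_prime_iff_eq hp Nat.prime_three).1 (hp.dvd_of_dvd_pow h1)
      rw [h9] at hcard hz2
      have hz' : z = 2 := hz2 (by decide)
      rw [hz'] at hcard
      have hc : Nat.card G = 360 := by omega
      rw [hp3] at hEc
      exact goodAut_six hnonab (sixData hnonab h hc) κ hκ
    · exact good_gen p f hf2 h9 hnonab h z hz hcard κ hκ

end

/-- Let `q = p^f ≥ 4` be a prime power and let `H` be a finite almost simple group whose
socle `S` (a nonabelian simple normal subgroup with trivial centralizer) is isomorphic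
to `PSL₂(q)`, with `H ≠ S`. Then for every subgroup `K` of `H` with `H = KS` there is a
`pp`-element `x ∈ S` with `H = ⟨K, x⟩`, i.e. `t(H) = 1`. -/
theorem t_eq_one_of_socle_psl_two (q p f : ℕ) [Fact p.Prime] (hq : q = p ^ f)
    (hf : 0 < f) (hq4 : 4 ≤ q)
    (H : Type*) [Group H] [Finite H] (S : Subgroup H)
    [S.Normal] (hsimple : IsSimpleGroup S) (hnonab : ¬ ∀ a b : S, a * b = b * a)
    (hcent : Subgroup.centralizer (S : Set H) = ⊥)
    (hiso : Nonempty
      (S ≃* Matrix.ProjectiveSpecialLinearGroup (Fin 2) (GaloisField p f)))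
    (hne : S ≠ ⊤) :
    ∀ K : Subgroup H, (K : Set H) * (S : Set H) = Set.univ →
      ∃ x ∈ S, IsPPElement x ∧ K ⊔ Subgroup.closure {x} = ⊤ := by
  intro K hK
  obtain ⟨φ⟩ := hiso
  rw [hq] at hq4
  exact final_of_good S hcent hne (fun κ hκ => good_psl p f hf hq4 S hnonab φ κ hκ) K hK
end

section
/- Let n ≥ 5, let H = Sym(n) be the symmetric group of degree n, and let K = ⟨(1 2)⟩. Then the set Λ = {(1 2 3), (1 2)(3 4), (1 2)(3 5), …, (1 2)(3 n)} is a K-independent K-generating set for H of cardinality n − 2; in particular m_K(Sym(n)) ≥ n − 2. -/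
/-- `m_K(H)`: the largest cardinality of a `K`-independent `K`-generating
set for `H`. -/
noncomputable def mRel {H : Type*} [Group H] (K : Subgroup H) : ℕ :=
  sSup {n | ∃ Y : Set H, K ⊔ Subgroup.closure Y = ⊤ ∧
    (∀ Z : Set H, Z ⊂ Y → K ⊔ Subgroup.closure Z ≠ ⊤) ∧ Y.ncard = n}

/-- Let `n ≥ 5`, `H = Sym(n)` (realized as the permutations of `Fin n`, where
`i : Fin n` represents the point `i + 1`), and `K = ⟨(1 2)⟩`. Then
`Λ = {(1 2 3), (1 2)(3 4), (1 2)(3 5), …, (1 2)(3 n)}` is a `K`-independent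
`K`-generating set for `H` of cardinality `n - 2`; in particular
`m_K(Sym(n)) ≥ n - 2`. -/
theorem symmetric_group_K_independent_set (n : ℕ) [NeZero n] (hn : 5 ≤ n)
    (K : Subgroup (Equiv.Perm (Fin n)))
    (hK : K = Subgroup.closure {Equiv.swap (0 : Fin n) 1})
    (Λ : Set (Equiv.Perm (Fin n)))
    (hΛ : Λ = insert (Equiv.swap (0 : Fin n) 2 * Equiv.swap 0 1)
      {x | ∃ k : Fin n, 3 ≤ (k : ℕ) ∧ x = Equiv.swap (0 : Fin n) 1 * Equiv.swap 2 k}) :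
    K ⊔ Subgroup.closure Λ = ⊤ ∧
    (∀ Z : Set (Equiv.Perm (Fin n)), Z ⊂ Λ → K ⊔ Subgroup.closure Z ≠ ⊤) ∧
    Λ.ncard = n - 2 ∧
    n - 2 ≤ mRel K := by
  have v0 : ((0 : Fin n) : ℕ) = 0 := by simp
  have v1 : ((1 : Fin n) : ℕ) = 1 := by
    change 1 % n = 1
    exact Nat.mod_eq_of_lt (by omega)
  have v2 : ((2 : Fin n) : ℕ) = 2 := by
    change 2 % n = 2
    exact Nat.mod_eq_of_lt (by omega)
  have h01 : (0 : Fin n) ≠ 1 := fun h => by have := congrArg Fin.val h; omega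
  have h02 : (0 : Fin n) ≠ 2 := fun h => by have := congrArg Fin.val h; omega
  have h12 : (1 : Fin n) ≠ 2 := fun h => by have := congrArg Fin.val h; omega
  have k0 : ∀ k : Fin n, 3 ≤ (k : ℕ) → k ≠ 0 := fun k hk h => by
    have := congrArg Fin.val h; omega
  have k1 : ∀ k : Fin n, 3 ≤ (k : ℕ) → k ≠ 1 := fun k hk h => by
    have := congrArg Fin.val h; omega
  have k2 : ∀ k : Fin n, 3 ≤ (k : ℕ) → k ≠ 2 := fun k hk h => by
    have := congrArg Fin.val h; omega
  have gen : K ⊔ Subgroup.closure Λ = ⊤ := by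
    set G := K ⊔ Subgroup.closure Λ with hG
    have s01 : Equiv.swap (0 : Fin n) 1 ∈ G := by
      apply Subgroup.mem_sup_left
      rw [hK]
      exact Subgroup.subset_closure rfl
    have hΛG : ∀ x ∈ Λ, x ∈ G := fun x hx =>
      Subgroup.mem_sup_right (Subgroup.subset_closure hx)
    have s02 : Equiv.swap (0 : Fin n) 2 ∈ G := by
      have := hΛG (Equiv.swap (0 : Fin n) 2 * Equiv.swap 0 1) (by rw [hΛ]; exact Or.inl rfl)
      exact (Subgroup.mul_mem_cancel_right G s01).1 this
    have s2k : ∀ k : Fin n, 3 ≤ (k : ℕ) → Equiv.swap 2 k ∈ G := fun k hk => by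
      have := hΛG (Equiv.swap (0 : Fin n) 1 * Equiv.swap 2 k)
        (by rw [hΛ]; exact Or.inr ⟨k, hk, rfl⟩)
      exact (Subgroup.mul_mem_cancel_left G s01).1 this
    have s2 : ∀ k : Fin n, Equiv.swap 2 k ∈ G := fun k => by
      by_cases hk : 3 ≤ (k : ℕ)
      · exact s2k k hk
      by_cases e0 : (k : ℕ) = 0
      · rw [show k = 0 from Fin.ext (by omega), Equiv.swap_comm]
        exact s02
      by_cases e1 : (k : ℕ) = 1
      · rw [show k = 1 from Fin.ext (by omega)]
        have e : Equiv.swap (2 : Fin n) 1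
            = Equiv.swap (0 : Fin n) 1 * Equiv.swap 0 2 * Equiv.swap 0 1 := by
          rw [Equiv.swap_comm 0 2, Equiv.swap_mul_swap_mul_swap h02.symm h12.symm,
            Equiv.swap_comm]
        rw [e]
        exact G.mul_mem (G.mul_mem s01 s02) s01
      · rw [show k = 2 from Fin.ext (by omega), Equiv.swap_self]
        exact G.one_mem
    rw [eq_top_iff, ← Equiv.Perm.closure_isSwap, Subgroup.closure_le]
    rintro _ ⟨i, j, hij, rfl⟩
    by_cases hi : i = 2
    · subst hi; exact s2 j
    by_cases hj : j = 2
    · subst hj; rw [Equiv.swap_comm]; exact s2 i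
    have e : Equiv.swap i j = Equiv.swap 2 j * Equiv.swap 2 i * Equiv.swap 2 j := by
      rw [Equiv.swap_comm 2 i, Equiv.swap_mul_swap_mul_swap hi hij, Equiv.swap_comm]
    rw [e]
    exact G.mul_mem (G.mul_mem (s2 j) (s2 i)) (s2 j)
  have ind : ∀ Z : Set (Equiv.Perm (Fin n)), Z ⊂ Λ → K ⊔ Subgroup.closure Z ≠ ⊤ := by
    intro Z hZ htop
    obtain ⟨hsub, x, hxΛ, hxZ⟩ := Set.ssubset_iff_exists.1 hZ
    have key : ∀ S : Subgroup (Equiv.Perm (Fin n)), Equiv.swap (0 : Fin n) 1 ∈ S →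
        (∀ z ∈ Z, z ∈ S) → ∀ g, g ∈ S := by
      intro S h1 h2 g
      have : K ⊔ Subgroup.closure Z ≤ S := by
        rw [hK, sup_le_iff, Subgroup.closure_le, Subgroup.closure_le]
        exact ⟨Set.singleton_subset_iff.2 h1, h2⟩
      rw [htop] at this
      exact this (Subgroup.mem_top g)
    rw [hΛ] at hxΛ
    rcases hxΛ with rfl | ⟨k, hk, rfl⟩
    · open scoped Pointwise in
      have := key (MulAction.stabilizer _ (({0, 1} : Set (Fin n)))) (by
          rw [MulAction.mem_stabilizer_iff, Set.smul_set_insert, Set.smul_set_singleton]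
          simp [Set.pair_comm]) (by
          intro z hz
          have hz' := hsub hz
          rw [hΛ] at hz'
          rcases hz' with rfl | ⟨j, hj, rfl⟩
          · exact absurd hz hxZ
          rw [MulAction.mem_stabilizer_iff, Set.smul_set_insert, Set.smul_set_singleton]
          simp [Set.pair_comm, Equiv.swap_apply_of_ne_of_ne h02 (k0 j hj).symm,
            Equiv.swap_apply_of_ne_of_ne h12 (k1 j hj).symm]) (Equiv.swap 0 2)
      rw [MulAction.mem_stabilizer_iff, Set.smul_set_insert, Set.smul_set_singleton] at this
      have h2 : (2 : Fin n) ∈ ({0, 1} : Set (Fin n)) := by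
        rw [← this]; simp
      rcases h2 with h | h
      · exact h02 h.symm
      · exact h12 h.symm
    · have := key (MulAction.stabilizer _ k) (by
          rw [MulAction.mem_stabilizer_iff, Equiv.Perm.smul_def]
          exact Equiv.swap_apply_of_ne_of_ne (k0 k hk) (k1 k hk)) (by
          intro z hz
          have hz' := hsub hz
          rw [hΛ] at hz'
          rw [MulAction.mem_stabilizer_iff, Equiv.Perm.smul_def]
          rcases hz' with rfl | ⟨j, hj, rfl⟩
          · rw [Equiv.Perm.mul_apply, Equiv.swap_apply_of_ne_of_ne (k0 k hk) (k1 k hk),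
              Equiv.swap_apply_of_ne_of_ne (k0 k hk) (k2 k hk)]
          · have hjk : k ≠ j := by
              rintro rfl
              exact hxZ hz
            rw [Equiv.Perm.mul_apply, Equiv.swap_apply_of_ne_of_ne (k2 k hk) hjk,
              Equiv.swap_apply_of_ne_of_ne (k0 k hk) (k1 k hk)]) (Equiv.swap 0 k)
      rw [MulAction.mem_stabilizer_iff, Equiv.Perm.smul_def, Equiv.swap_apply_right] at this
      exact k0 k hk this.symm
  have card : Λ.ncard = n - 2 := by
    have himg : {x | ∃ k : Fin n, 3 ≤ (k : ℕ) ∧ x = Equiv.swap (0 : Fin n) 1 * Equiv.swap 2 k}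
        = (fun k : Fin n => Equiv.swap (0 : Fin n) 1 * Equiv.swap 2 k) ''
          {k : Fin n | 3 ≤ (k : ℕ)} := by
      ext x
      constructor
      · rintro ⟨k, hk, rfl⟩; exact ⟨k, hk, rfl⟩
      · rintro ⟨k, hk, rfl⟩; exact ⟨k, hk, rfl⟩
    rw [hΛ, Set.ncard_insert_of_notMem _ (Set.toFinite _), himg, Set.ncard_image_of_injective]
    · have : (Fin.val '' {k : Fin n | 3 ≤ (k : ℕ)}) = (Finset.Ico 3 n : Set ℕ) := by
        ext m
        simp only [Set.mem_image, Set.mem_ofPred_eq, Finset.coe_Ico, Set.mem_Ico]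
        constructor
        · rintro ⟨k, hk, rfl⟩; exact ⟨hk, k.2⟩
        · rintro ⟨h1, h2⟩; exact ⟨⟨m, h2⟩, h1, rfl⟩
      rw [← Set.ncard_image_of_injective _ Fin.val_injective, this, Set.ncard_coe_finset,
        Nat.card_Ico]
      omega
    · intro i j h
      have := congrArg (fun g : Equiv.Perm (Fin n) => g 2) (mul_left_cancel h)
      simpa using this
    · rintro ⟨k, hk, h⟩
      have := congrArg (fun g : Equiv.Perm (Fin n) => g 1) h
      simp [Equiv.swap_apply_of_ne_of_ne h12 (k1 k hk).symm] at this
      exact h02 this.symm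
  refine ⟨gen, ind, card, ?_⟩
  refine le_csSup ⟨Nat.card (Equiv.Perm (Fin n)), ?_⟩ ⟨Λ, gen, ind, card⟩
  rintro _ ⟨Y, -, -, rfl⟩
  exact Set.ncard_le_card Y
end
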